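/- Let G be a planar multigraph with vertex set T ∪ W (terminals T and non-terminals W), where W is a stable (independent) set, every vertex of W has degree at least 3, all parallel edges occur only between pairs of terminals, and the terminal set T is k-element-connected in G with k > 10. Then there exist two terminals t₁, t₂ ∈ T joined by at least ⌈k/5⌉ − 1 parallel edges. -/

import Mathlib

open SimpleGraph

/-- Two walks between the same pair of vertices are *element-disjoint* with respect to a
terminal set `T` if they share no edges and every common vertex is a terminal or an
endpoint. -/
def ElemDisjWalks {V : Type*} (T : Set V) {G : SimpleGraph V} {u v : V}
    (W₁ W₂ : G.Walk u v) : Prop :=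
  (∀ e, e ∈ W₁.edges → e ∉ W₂.edges) ∧
  (∀ x, x ∈ W₁.support → x ∈ W₂.support → x ∈ T ∪ {u, v})

/-- There exist `k` pairwise element-disjoint `u`-`v` paths in `G`
(with respect to the terminal set `T`). -/
def HasElemPaths {V : Type*} (G : SimpleGraph V) (T : Set V) (u v : V) (k : ℕ) : Prop :=
  ∃ P : Fin k → G.Walk u v, (∀ i, (P i).IsPath) ∧
    ∀ i j, i ≠ j → ElemDisjWalks T (P i) (P j)

/-- The element-connectivity `κ'_G(u,v)`: the maximum number of `u`-`v` paths that are
pairwise disjoint in edges and in non-terminal vertices. -/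
noncomputable def elemConn {V : Type*} (G : SimpleGraph V) (T : Set V) (u v : V) : ℕ :=
  sSup {k | HasElemPaths G T u v k}

/-- `G` has `H` as a minor: there are nonempty, pairwise-disjoint, connected branch sets,
one for each vertex of `H`, with an edge of `G` between the branch sets of any two
adjacent vertices of `H`. -/
def HasMinor {V : Type*} {W : Type*} (G : SimpleGraph V) (H : SimpleGraph W) : Prop :=
  ∃ f : W → Set V,
    (∀ w, (f w).Nonempty) ∧
    (∀ w, (G.induce (f w)).Connected) ∧
    (∀ w₁ w₂, w₁ ≠ w₂ → Disjoint (f w₁) (f w₂)) ∧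
    (∀ w₁ w₂, H.Adj w₁ w₂ → ∃ a ∈ f w₁, ∃ b ∈ f w₂, G.Adj a b)

/-- Planarity, via Wagner's theorem: a graph is planar iff it has neither a `K₅` minor
nor a `K₃,₃` minor. -/
def IsPlanar {V : Type*} (G : SimpleGraph V) : Prop :=
  ¬ HasMinor G (completeGraph (Fin 5)) ∧
  ¬ HasMinor G (completeBipartiteGraph (Fin 3) (Fin 3))

/-- In a multigraph given by its underlying simple graph `G` and an edge-multiplicity
function `m`, the terminals `u` and `v` are joined by `k` pairwise element-disjoint
paths: `k` paths of the underlying simple graph such that every non-terminal vertex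
lies on at most one of them and every simple edge is used at most as often as its
multiplicity. -/
def MultiElemConn {V : Type*} (G : SimpleGraph V) (m : V → V → ℕ) (T : Set V)
    (u v : V) (k : ℕ) : Prop :=
  ∃ P : Fin k → G.Walk u v, (∀ i, (P i).IsPath) ∧
    (∀ x, x ∉ T ∪ {u, v} → ({i | x ∈ (P i).support} : Set (Fin k)).Subsingleton) ∧
    (∀ a b, ({i | s(a, b) ∈ (P i).edges} : Set (Fin k)).ncard ≤ m a b)

namespace PPE

/-- closed-set connectivity of `A` in `G` -/
def PC {V : Type*} (G : SimpleGraph V) (A : Set V) : Prop :=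
  A.Nonempty ∧ ∀ S : Set V, (∃ a ∈ A, a ∈ S) →
    (∀ x ∈ A, x ∈ S → ∀ y ∈ A, G.Adj x y → y ∈ S) → ∀ a ∈ A, a ∈ S

theorem pc_iff {V : Type*} (G : SimpleGraph V) (A : Set V) :
    PC G A ↔ (A.Nonempty ∧ (G.induce A).Connected) := by
  constructor
  · rintro ⟨hne, h⟩
    refine ⟨hne, ?_⟩
    obtain ⟨a0, ha0⟩ := hne
    have : Nonempty A := ⟨⟨a0, ha0⟩⟩
    refine SimpleGraph.Connected.mk ?_
    intro u v
    have := h {z | ∃ hz : z ∈ A, (G.induce A).Reachable u ⟨z, hz⟩} ⟨u, u.2, u.2, Reachable.refl _⟩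
      (by
        rintro x hx ⟨_, hr⟩ y hy hxy
        refine ⟨hy, hr.trans ?_⟩
        exact SimpleGraph.Adj.reachable (by simpa using hxy)) v v.2
    exact this.2
  · rintro ⟨hne, h⟩
    refine ⟨hne, ?_⟩
    rintro S ⟨a, ha, haS⟩ hcl b hb
    obtain ⟨p⟩ := h.preconnected ⟨a, ha⟩ ⟨b, hb⟩
    have key : ∀ (u v : A) (p : (G.induce A).Walk u v), (u : V) ∈ S → (v : V) ∈ S := by
      intro u v p
      induction p with
      | nil => exact id
      | cons hadj _ ih =>
        intro hu
        exact ih (hcl _ (Subtype.property _) hu _ (Subtype.property _) (by simpa using hadj))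
    exact key _ _ p haS

/-- minor model -/
def Model {V W : Type*} (G : SimpleGraph V) (H : SimpleGraph W) (f : W → Set V) : Prop :=
  (∀ w, PC G (f w)) ∧ (∀ w₁ w₂, w₁ ≠ w₂ → ∀ x ∈ f w₁, x ∉ f w₂) ∧
    (∀ w₁ w₂, H.Adj w₁ w₂ → ∃ a ∈ f w₁, ∃ b ∈ f w₂, G.Adj a b)

theorem hasMinor_iff {V W : Type*} (G : SimpleGraph V) (H : SimpleGraph W) :
    HasMinor G H ↔ ∃ f, Model G H f := by
  constructor
  · rintro ⟨f, h1, h2, h3, h4⟩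
    exact ⟨f, fun w => (pc_iff _ _).2 ⟨h1 w, h2 w⟩,
      fun a b hab x hx hx' => Set.disjoint_left.1 (h3 a b hab) hx hx', h4⟩
  · rintro ⟨f, h1, h2, h3⟩
    exact ⟨f, fun w => (h1 w).1, fun w => ((pc_iff _ _).1 (h1 w)).2,
      fun a b hab => Set.disjoint_left.2 (h2 a b hab), h3⟩

theorem PC.mono {V : Type*} {G G' : SimpleGraph V} (h : G ≤ G') {A : Set V} (hA : PC G A) :
    PC G' A :=
  ⟨hA.1, fun S hS hc => hA.2 S hS (fun x hx hxS y hy hxy => hc x hx hxS y hy (h hxy))⟩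

theorem Model.mono {V W : Type*} {G G' : SimpleGraph V} (h : G ≤ G') {H : SimpleGraph W}
    {f : W → Set V} (hf : Model G H f) : Model G' H f :=
  ⟨fun w => (hf.1 w).mono h, hf.2.1, fun a b hab => by
    obtain ⟨x, hx, y, hy, hxy⟩ := hf.2.2 a b hab
    exact ⟨x, hx, y, hy, h hxy⟩⟩

abbrev K5 : SimpleGraph (Fin 5) := completeGraph (Fin 5)
abbrev K33 : SimpleGraph (Fin 3 ⊕ Fin 3) := completeBipartiteGraph (Fin 3) (Fin 3)

def Pl {V : Type*} (G : SimpleGraph V) : Prop :=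
  (∀ f, ¬ Model G K5 f) ∧ (∀ f, ¬ Model G K33 f)

theorem pl_iff {V : Type*} (G : SimpleGraph V) : IsPlanar G ↔ Pl G := by
  unfold IsPlanar Pl
  rw [hasMinor_iff, hasMinor_iff, not_exists, not_exists]

theorem Pl.mono {V : Type*} {G G' : SimpleGraph V} (h : G ≤ G') (hp : Pl G') : Pl G :=
  ⟨fun f hf => hp.1 f (hf.mono h), fun f hf => hp.2 f (hf.mono h)⟩

theorem pc_singleton {V : Type*} (G : SimpleGraph V) (v : V) : PC G {v} :=
  ⟨⟨v, rfl⟩, by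
    rintro S ⟨a, rfl, ha⟩ _ b rfl
    exact ha⟩

theorem pc_insert {V : Type*} {G : SimpleGraph V} {A : Set V} {v a : V} (hA : PC G A)
    (ha : a ∈ A) (hv : G.Adj v a) : PC G (insert v A) := by
  refine ⟨⟨v, by simp⟩, ?_⟩
  rintro S ⟨b, hb, hbS⟩ hc
  have hsub : ∀ x ∈ A, x ∈ S := by
    apply hA.2 S
    · rcases hb with rfl | hb
      · exact ⟨a, ha, hc _ (by simp) hbS _ (by simp [ha]) hv⟩
      · exact ⟨b, hb, hbS⟩
    · intro x hx hxS y hy hxy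
      exact hc x (by simp [hx]) hxS y (by simp [hy]) hxy
  rintro x (rfl | hx)
  · exact hc a (by simp [ha]) (hsub a ha) _ (by simp) hv.symm
  · exact hsub x hx

theorem pc_reach {V : Type*} {G H : SimpleGraph V} (h : H ≤ G) (p : V) :
    PC G {z | H.Reachable p z} := by
  refine ⟨⟨p, Reachable.refl _⟩, ?_⟩
  rintro S ⟨b, hb, hbS⟩ hc
  have key : ∀ (u v : V) (q : H.Walk u v), H.Reachable p u → u ∈ S → v ∈ S := by
    intro u v q
    induction q with
    | nil => exact fun _ h => h
    | cons hadj _ ih =>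
      intro hr hu
      have hr' := hr.trans hadj.reachable
      exact ih hr' (hc _ hr hu _ hr' (h hadj))
  intro a ha
  obtain ⟨q⟩ := (Reachable.symm hb).trans ha
  exact key _ _ q hb hbS

theorem reach_closed {V : Type*} {H : SimpleGraph V} {u v : V} (h : H.Reachable u v) (S : Set V)
    (hu : u ∈ S) (hc : ∀ x ∈ S, ∀ y, H.Adj x y → y ∈ S) : v ∈ S := by
  obtain ⟨q⟩ := h
  induction q with
  | nil => exact hu
  | cons hadj _ ih => exact ih (hc _ hu _ hadj)

theorem mkK5 {V : Type*} {G : SimpleGraph V} (A B C D E : Set V)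
    (cA : PC G A) (cB : PC G B) (cC : PC G C) (cD : PC G D) (cE : PC G E)
    (dAB : ∀ x ∈ A, x ∉ B) (dAC : ∀ x ∈ A, x ∉ C) (dAD : ∀ x ∈ A, x ∉ D) (dAE : ∀ x ∈ A, x ∉ E)
    (dBC : ∀ x ∈ B, x ∉ C) (dBD : ∀ x ∈ B, x ∉ D) (dBE : ∀ x ∈ B, x ∉ E)
    (dCD : ∀ x ∈ C, x ∉ D) (dCE : ∀ x ∈ C, x ∉ E) (dDE : ∀ x ∈ D, x ∉ E)
    (aAB : ∃ a ∈ A, ∃ b ∈ B, G.Adj a b) (aAC : ∃ a ∈ A, ∃ b ∈ C, G.Adj a b)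
    (aAD : ∃ a ∈ A, ∃ b ∈ D, G.Adj a b) (aAE : ∃ a ∈ A, ∃ b ∈ E, G.Adj a b)
    (aBC : ∃ a ∈ B, ∃ b ∈ C, G.Adj a b) (aBD : ∃ a ∈ B, ∃ b ∈ D, G.Adj a b)
    (aBE : ∃ a ∈ B, ∃ b ∈ E, G.Adj a b) (aCD : ∃ a ∈ C, ∃ b ∈ D, G.Adj a b)
    (aCE : ∃ a ∈ C, ∃ b ∈ E, G.Adj a b) (aDE : ∃ a ∈ D, ∃ b ∈ E, G.Adj a b) :
    ∃ f, Model G K5 f := by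
  have sw : ∀ X Y : Set V, (∃ a ∈ X, ∃ b ∈ Y, G.Adj a b) → (∃ a ∈ Y, ∃ b ∈ X, G.Adj a b) := by
    rintro X Y ⟨a, ha, b, hb, h⟩
    exact ⟨b, hb, a, ha, h.symm⟩
  have sd : ∀ X Y : Set V, (∀ x ∈ X, x ∉ Y) → (∀ x ∈ Y, x ∉ X) := fun X Y h x hx hx' => h x hx' hx
  refine ⟨![A, B, C, D, E], ?_, ?_, ?_⟩
  · intro w
    fin_cases w <;> assumption
  · intro i j hij
    fin_cases i <;> fin_cases j <;> first | exact absurd rfl hij | assumption | (apply sd; assumption)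
  · intro i j hij
    fin_cases i <;> fin_cases j <;>
      first | exact absurd rfl hij.ne | assumption | (apply sw; assumption)

theorem mkK33 {V : Type*} {G : SimpleGraph V} (A B : Fin 3 → Set V)
    (cA : ∀ i, PC G (A i)) (cB : ∀ i, PC G (B i))
    (dA : ∀ i j, i ≠ j → ∀ x ∈ A i, x ∉ A j) (dB : ∀ i j, i ≠ j → ∀ x ∈ B i, x ∉ B j)
    (dAB : ∀ i j, ∀ x ∈ A i, x ∉ B j)
    (aAB : ∀ i j, ∃ a ∈ A i, ∃ b ∈ B j, G.Adj a b) :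
    ∃ f, Model G K33 f := by
  refine ⟨Sum.elim A B, ?_, ?_, ?_⟩
  · rintro (i | i)
    exacts [cA i, cB i]
  · rintro (i | i) (j | j) hij
    · exact dA i j (by simpa using hij)
    · exact dAB i j
    · exact fun x hx hx' => dAB j i x hx' hx
    · exact dB i j (by simpa using hij)
  · rintro (i | i) (j | j) hij
    · simp at hij
    · exact aAB i j
    · obtain ⟨a, ha, b, hb, h⟩ := aAB j i
      exact ⟨b, hb, a, ha, h.symm⟩
    · simp at hij

/-- contract the edge from `w` to `t` into `t` -/
def contr {V : Type*} (G : SimpleGraph V) (w t : V) : SimpleGraph V where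
  Adj p q := p ≠ w ∧ q ≠ w ∧ p ≠ q ∧ (G.Adj p q ∨ (p = t ∧ G.Adj w q) ∨ (q = t ∧ G.Adj w p))
  symm := ⟨by
    rintro p q ⟨h1, h2, h3, h4⟩
    refine ⟨h2, h1, h3.symm, ?_⟩
    rcases h4 with h | h | h
    · exact Or.inl h.symm
    · exact Or.inr (Or.inr h)
    · exact Or.inr (Or.inl h)⟩
  loopless := ⟨by
    rintro p ⟨_, _, h, _⟩
    exact h rfl⟩

theorem contr_model {V W : Type*} {G : SimpleGraph V} {w t : V} (hwt : G.Adj w t)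
    {H : SimpleGraph W} (hH : ∀ h, ∃ h', H.Adj h h') {f : W → Set V}
    (hf : Model (contr G w t) H f) : ∃ f, Model G H f := by
  have hw : ∀ h, w ∉ f h := by
    intro h hwh
    obtain ⟨h', hh⟩ := hH h
    obtain ⟨a, ha, b, hb, hab⟩ := hf.2.2 h h' hh
    have := (hf.1 h).2 {w} ⟨w, hwh, rfl⟩ (by
      rintro x hx rfl y hy hxy
      exact absurd rfl hxy.1) a ha
    exact hab.1 this
  refine ⟨fun h => {z | z ∈ f h ∨ (z = w ∧ t ∈ f h)}, ?_, ?_, ?_⟩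
  · intro h
    refine ⟨?_, ?_⟩
    · obtain ⟨a, ha⟩ := (hf.1 h).1
      exact ⟨a, Or.inl ha⟩
    · rintro S ⟨a, ha, haS⟩ hc
      have hsub : ∀ x ∈ f h, x ∈ S := by
        apply (hf.1 h).2 S
        · rcases ha with ha | ⟨rfl, ht⟩
          · exact ⟨a, ha, haS⟩
          · exact ⟨t, ht, hc _ (Or.inr ⟨rfl, ht⟩) haS _ (Or.inl ht) hwt⟩
        · rintro x hx hxS y hy ⟨_, _, _, h4⟩
          rcases h4 with h4 | ⟨rfl, h4⟩ | ⟨rfl, h4⟩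
          · exact hc x (Or.inl hx) hxS y (Or.inl hy) h4
          · have : w ∈ S := hc _ (Or.inl hx) hxS _ (Or.inr ⟨rfl, hx⟩) hwt.symm
            exact hc w (Or.inr ⟨rfl, hx⟩) this y (Or.inl hy) h4
          · have : w ∈ S := hc _ (Or.inl hx) hxS _ (Or.inr ⟨rfl, hy⟩) h4.symm
            exact hc w (Or.inr ⟨rfl, hy⟩) this _ (Or.inl hy) hwt
      rintro x (hx | ⟨rfl, ht⟩)
      · exact hsub x hx
      · exact hc t (Or.inl ht) (hsub t ht) _ (Or.inr ⟨rfl, ht⟩) hwt.symm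
  · rintro i j hij x (hx | ⟨rfl, hx⟩) (hx' | ⟨hx', h2⟩)
    · exact hf.2.1 i j hij x hx hx'
    · exact hw i (hx' ▸ hx)
    · exact hw j hx'
    · exact hf.2.1 i j hij t hx h2
  · intro i j hij
    obtain ⟨a, ha, b, hb, _, _, _, h4⟩ := hf.2.2 i j hij
    rcases h4 with h4 | ⟨rfl, h4⟩ | ⟨rfl, h4⟩
    · exact ⟨a, Or.inl ha, b, Or.inl hb, h4⟩
    · exact ⟨w, Or.inr ⟨rfl, ha⟩, b, Or.inl hb, h4⟩
    · exact ⟨a, Or.inl ha, w, Or.inr ⟨rfl, hb⟩, h4.symm⟩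

theorem K5_nbr (h : Fin 5) : ∃ h', K5.Adj h h' := by
  refine ⟨h + 1, ?_⟩
  fin_cases h <;> simp

theorem K33_nbr (h : Fin 3 ⊕ Fin 3) : ∃ h', K33.Adj h h' := by
  rcases h with i | i
  · exact ⟨Sum.inr 0, by simp⟩
  · exact ⟨Sum.inl 0, by simp⟩

theorem Pl.contr {V : Type*} {G : SimpleGraph V} {w t : V} (hwt : G.Adj w t) (h : Pl G) :
    Pl (contr G w t) := by
  constructor
  · intro f hf
    obtain ⟨g, hg⟩ := contr_model hwt K5_nbr hf
    exact h.1 g hg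
  · intro f hf
    obtain ⟨g, hg⟩ := contr_model hwt K33_nbr hf
    exact h.2 g hg

/-- add the edge `p q` -/
def addE {V : Type*} (G : SimpleGraph V) (p q : V) (hpq : p ≠ q) : SimpleGraph V where
  Adj a b := G.Adj a b ∨ (a = p ∧ b = q) ∨ (a = q ∧ b = p)
  symm := ⟨by
    rintro a b (h | h | h)
    · exact Or.inl h.symm
    · exact Or.inr (Or.inr h.symm)
    · exact Or.inr (Or.inl h.symm)⟩
  loopless := ⟨by
    rintro a (h | ⟨rfl, h⟩ | ⟨rfl, h⟩)
    · exact h.ne rfl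
    · exact hpq h
    · exact hpq h.symm⟩

theorem addE_comm {V : Type*} (G : SimpleGraph V) (p q : V) (hpq : p ≠ q) :
    addE G p q hpq = addE G q p hpq.symm := by
  ext a b
  simp only [addE]
  tauto

theorem yd_direct {V W : Type*} {G : SimpleGraph V} {w p q : V} (hpq : p ≠ q)
    (hp : G.Adj w p) (hq : G.Adj w q) {H : SimpleGraph W} {f : W → Set V}
    (hf : Model (addE G p q hpq) H f)
    (h1 : ∀ h, p ∈ f h → q ∈ f h → w ∈ f h)
    (h2 : ∀ h h', H.Adj h h' → p ∈ f h → q ∈ f h' → ∃ a ∈ f h, ∃ b ∈ f h', G.Adj a b) :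
    Model G H f := by
  refine ⟨fun h => ⟨(hf.1 h).1, ?_⟩, hf.2.1, ?_⟩
  · intro S hS hc
    apply (hf.1 h).2 S hS
    rintro x hx hxS y hy (hxy | ⟨rfl, rfl⟩ | ⟨rfl, rfl⟩)
    · exact hc x hx hxS y hy hxy
    · have hw := h1 h hx hy
      exact hc w hw (hc _ hx hxS w hw hp.symm) _ hy hq
    · have hw := h1 h hy hx
      exact hc w hw (hc _ hx hxS w hw hq.symm) _ hy hp
  · intro h h' hh
    obtain ⟨a, ha, b, hb, hab | ⟨rfl, rfl⟩ | ⟨rfl, rfl⟩⟩ := hf.2.2 h h' hh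
    · exact ⟨a, ha, b, hb, hab⟩
    · exact h2 h h' hh ha hb
    · obtain ⟨a, ha, b, hb, hab⟩ := h2 h' h hh.symm hb ha
      exact ⟨b, hb, a, ha, hab.symm⟩

theorem yd_move {V W : Type*} {G : SimpleGraph V} {w p q r : V} (hpq : p ≠ q)
    (hp : G.Adj w p) (hq : G.Adj w q) (hr : G.Adj w r)
    (hN : ∀ u, G.Adj w u → u = p ∨ u = q ∨ u = r)
    {H : SimpleGraph W} {f : W → Set V}
    (hf : Model (addE G p q hpq) H f)
    (h1 : ∀ h, w ∈ f h → p ∉ f h ∧ q ∉ f h ∧ r ∈ f h)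
    (h2 : ∀ h h', H.Adj h h' → w ∈ f h → q ∈ f h' → p ∈ f h') :
    ∃ f, Model G H f := by
  have hpw : p ≠ w := hp.ne.symm
  have hqw : q ≠ w := hq.ne.symm
  have hrw : r ≠ w := hr.ne.symm
  refine ⟨fun h => {z | (z ∈ f h ∧ z ≠ w) ∨ (z = w ∧ p ∈ f h)}, ?_, ?_, ?_⟩
  · intro h
    refine ⟨?_, ?_⟩
    · by_cases hw : w ∈ f h
      · exact ⟨r, Or.inl ⟨(h1 h hw).2.2, hrw⟩⟩
      · obtain ⟨a, ha⟩ := (hf.1 h).1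
        exact ⟨a, Or.inl ⟨ha, fun e => hw (e ▸ ha)⟩⟩
    · rintro S ⟨a, ha, haS⟩ hc
      have hsub : ∀ x ∈ f h, x ≠ w → x ∈ S := by
        intro x hx hxw
        have := (hf.1 h).2 {z | (z ≠ w ∧ z ∈ S) ∨ (z = w ∧ r ∈ S)} (by
          rcases ha with ⟨ha, haw⟩ | ⟨rfl, ha⟩
          · exact ⟨a, ha, Or.inl ⟨haw, haS⟩⟩
          · exact ⟨p, ha, Or.inl ⟨hpw, hc _ (Or.inr ⟨rfl, ha⟩) haS _ (Or.inl ⟨ha, hpw⟩) hp⟩⟩) (by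
          rintro x hx hxS y hy hxy
          rcases hxS with ⟨hxw, hxS⟩ | ⟨rfl, hrS⟩
          · by_cases hyw : y = w
            · subst hyw
              refine Or.inr ⟨rfl, ?_⟩
              obtain ⟨k1, k2, k3⟩ := h1 h hy
              rcases hxy with hxy | ⟨rfl, _⟩ | ⟨rfl, _⟩
              · rcases hN _ hxy.symm with rfl | rfl | rfl
                · exact absurd hx k1
                · exact absurd hx k2
                · exact hxS
              · exact absurd hx k1
              · exact absurd hx k2
            · refine Or.inl ⟨hyw, ?_⟩
              rcases hxy with hxy | ⟨rfl, rfl⟩ | ⟨rfl, rfl⟩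
              · exact hc x (Or.inl ⟨hx, hxw⟩) hxS y (Or.inl ⟨hy, hyw⟩) hxy
              · have hw : w ∈ S := hc _ (Or.inl ⟨hx, hxw⟩) hxS w (Or.inr ⟨rfl, hx⟩) hp.symm
                exact hc w (Or.inr ⟨rfl, hx⟩) hw _ (Or.inl ⟨hy, hyw⟩) hq
              · have hw : w ∈ S := hc _ (Or.inl ⟨hx, hxw⟩) hxS w (Or.inr ⟨rfl, hy⟩) hq.symm
                exact hc w (Or.inr ⟨rfl, hy⟩) hw _ (Or.inl ⟨hy, hyw⟩) hp
          · obtain ⟨k1, k2, k3⟩ := h1 h hx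
            rcases hxy with hxy | ⟨e, _⟩ | ⟨e, _⟩
            · rcases hN _ hxy with rfl | rfl | rfl
              · exact absurd hy k1
              · exact absurd hy k2
              · exact Or.inl ⟨hrw, hrS⟩
            · exact absurd e.symm hpw
            · exact absurd e.symm hqw) x hx
        rcases this with h | h
        · exact h.2
        · exact absurd h.1 hxw
      rintro x (⟨hx, hxw⟩ | ⟨rfl, hx⟩)
      · exact hsub x hx hxw
      · exact hc p (Or.inl ⟨hx, hpw⟩) (hsub p hx hpw) _ (Or.inr ⟨rfl, hx⟩) hp.symm
  · rintro i j hij x (⟨hx, hxw⟩ | ⟨rfl, hx⟩) (⟨hx', hxw'⟩ | ⟨hx', h2⟩)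
    · exact hf.2.1 i j hij x hx hx'
    · exact hxw hx'
    · exact hxw' rfl
    · exact hf.2.1 i j hij p hx h2
  · have main : ∀ h h', H.Adj h h' → ∀ a ∈ f h, ∀ b ∈ f h', (addE G p q hpq).Adj a b → b ≠ w →
        ∃ a, ((a ∈ f h ∧ a ≠ w) ∨ (a = w ∧ p ∈ f h)) ∧
        ∃ b, ((b ∈ f h' ∧ b ≠ w) ∨ (b = w ∧ p ∈ f h')) ∧ G.Adj a b := by
      intro h h' hh a ha b hb hab hbw
      by_cases haw : a = w
      · subst haw
        obtain ⟨k1, k2, k3⟩ := h1 h ha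
        have hpb : p ∈ f h' := by
          rcases hab with hab | ⟨e, _⟩ | ⟨e, _⟩
          · rcases hN _ hab with rfl | rfl | rfl
            · exact hb
            · exact h2 h h' hh ha hb
            · exact absurd hb (hf.2.1 h h' hh.ne _ k3)
          · exact absurd e.symm hpw
          · exact absurd e.symm hqw
        exact ⟨r, Or.inl ⟨k3, hrw⟩, a, Or.inr ⟨rfl, hpb⟩, hr.symm⟩
      · rcases hab with hab | ⟨rfl, rfl⟩ | ⟨rfl, rfl⟩
        · exact ⟨a, Or.inl ⟨ha, haw⟩, b, Or.inl ⟨hb, hbw⟩, hab⟩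
        · exact ⟨w, Or.inr ⟨rfl, ha⟩, b, Or.inl ⟨hb, hbw⟩, hq⟩
        · exact ⟨a, Or.inl ⟨ha, haw⟩, w, Or.inr ⟨rfl, hb⟩, hq.symm⟩
    intro h h' hh
    obtain ⟨a, ha, b, hb, hab⟩ := hf.2.2 h h' hh
    by_cases hbw : b = w
    · have haw : a ≠ w := fun e => hf.2.1 h h' hh.ne a ha (by rw [e, ← hbw]; exact hb)
      obtain ⟨b, hb, a, ha, hab⟩ := main h' h hh.symm b hb a ha hab.symm haw
      exact ⟨a, ha, b, hb, hab.symm⟩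
    · exact main h h' hh a ha b hb hab hbw

/-- generic step for adding an edge between two neighbours of a cubic vertex -/
theorem yd_gen {V W : Type*} {G : SimpleGraph V} {w p q r : V} (hpq : p ≠ q)
    (hp : G.Adj w p) (hq : G.Adj w q) (hr : G.Adj w r)
    (hN : ∀ u, G.Adj w u → u = p ∨ u = q ∨ u = r)
    {H : SimpleGraph W} {f : W → Set V}
    (hf : Model (addE G p q hpq) H f)
    (hs : ∀ h, w ∈ f h → ∃ z ∈ f h, z ≠ w) :
    (∃ f, Model G H f) ∨ ∃ i j k, H.Adj i j ∧ H.Adj i k ∧ H.Adj j k ∧ w ∈ f i ∧ r ∈ f i ∧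
      p ∈ f j ∧ q ∈ f k := by
  have hdis : ∀ i j x, x ∈ f i → x ∈ f j → i = j := by
    intro i j x hi hj
    by_contra hij
    exact hf.2.1 i j hij x hi hj
  by_cases hw : ∃ A, w ∈ f A
  swap
  · left
    push Not at hw
    exact yd_move hpq hp hq hr hN hf (fun h hh => absurd hh (hw h)) (fun h _ _ hh => absurd hh (hw h))
  obtain ⟨A, hwA⟩ := hw
  by_cases hA : p ∈ f A ∨ q ∈ f A
  · left
    refine ⟨f, yd_direct hpq hp hq hf ?_ ?_⟩
    · intro h h1 h2
      rcases hA with hA | hA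
      · rwa [hdis h A p h1 hA]
      · rwa [hdis h A q h2 hA]
    · intro h h' hh h1 h2
      rcases hA with hA | hA
      · refine ⟨w, ?_, q, h2, hq⟩
        rwa [hdis h A p h1 hA]
      · refine ⟨p, h1, w, ?_, hp.symm⟩
        rwa [hdis h' A q h2 hA]
  push Not at hA
  obtain ⟨hpA, hqA⟩ := hA
  have hrA : r ∈ f A := by
    by_contra hrA
    obtain ⟨z, hz, hzw⟩ := hs A hwA
    refine hzw ((hf.1 A).2 {w} ⟨w, hwA, rfl⟩ ?_ z hz)
    rintro x hx rfl y hy (hxy | ⟨e, _⟩ | ⟨e, _⟩)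
    · rcases hN _ hxy with rfl | rfl | rfl
      · exact absurd hy hpA
      · exact absurd hy hqA
      · exact absurd hy hrA
    · exact absurd e hp.ne
    · exact absurd e hq.ne
  have h1 : ∀ h, w ∈ f h → p ∉ f h ∧ q ∉ f h ∧ r ∈ f h := by
    intro h hh
    rw [hdis h A w hh hwA]
    exact ⟨hpA, hqA, hrA⟩
  by_cases hc1 : ∀ h h', H.Adj h h' → w ∈ f h → q ∈ f h' → p ∈ f h'
  · left
    exact yd_move hpq hp hq hr hN hf h1 hc1
  by_cases hc2 : ∀ h h', H.Adj h h' → w ∈ f h → p ∈ f h' → q ∈ f h'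
  · left
    rw [addE_comm] at hf
    refine yd_move hpq.symm hq hp hr ?_ hf ?_ hc2
    · intro u hu
      have := hN u hu
      tauto
    · intro h hh
      have := h1 h hh
      tauto
  push Not at hc1 hc2
  obtain ⟨i, k, hik, hi, hk, hk'⟩ := hc1
  obtain ⟨i', j, hij, hi', hj, hj'⟩ := hc2
  obtain rfl := hdis i' i w hi' hi
  by_cases hjk : H.Adj j k
  · right
    exact ⟨i', j, k, hij, hik, hjk, hi, (h1 _ hi).2.2, hj, hk⟩
  · left
    refine ⟨f, yd_direct hpq hp hq hf ?_ ?_⟩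
    · intro h h2 h3
      obtain rfl := hdis h j p h2 hj
      exact absurd h3 hj'
    · intro h h' hh h2 h3
      obtain rfl := hdis h j p h2 hj
      obtain rfl := hdis h' k q h3 hk
      exact absurd hh hjk

theorem K33_tri (i j k : Fin 3 ⊕ Fin 3) (h1 : K33.Adj i j) (h2 : K33.Adj i k) :
    ¬ K33.Adj j k := by
  rcases i with i | i <;> rcases j with j | j <;> rcases k with k | k <;> simp_all

theorem K5_two (i j k : Fin 5) : ∃ d e : Fin 5, d ≠ e ∧ d ≠ i ∧ d ≠ j ∧ d ≠ k ∧
    e ≠ i ∧ e ≠ j ∧ e ≠ k := by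
  revert i j k
  decide

theorem yd {V : Type*} {G : SimpleGraph V} {w p q r : V} (hpq : p ≠ q) (hpr : p ≠ r) (hqr : q ≠ r)
    (hp : G.Adj w p) (hq : G.Adj w q) (hr : G.Adj w r)
    (hN : ∀ u, G.Adj w u → u = p ∨ u = q ∨ u = r) (hG : Pl G) : Pl (addE G p q hpq) := by
  have hN' : ∀ u, (addE G p q hpq).Adj w u → u = p ∨ u = q ∨ u = r := by
    rintro u (h | ⟨h, _⟩ | ⟨h, _⟩)
    · exact hN u h
    · exact absurd h hp.ne
    · exact absurd h hq.ne
  constructor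
  · intro f hf
    have hdis : ∀ i j x, x ∈ f i → x ∈ f j → i = j := by
      intro i j x hi hj
      by_contra hij
      exact hf.2.1 i j hij x hi hj
    have hs : ∀ h, w ∈ f h → ∃ z ∈ f h, z ≠ w := by
      intro h hw
      by_contra hcon
      push Not at hcon
      have hx : ∀ h' : Fin 5, h' ≠ h → p ∈ f h' ∨ q ∈ f h' ∨ r ∈ f h' := by
        intro h' hh
        obtain ⟨a, ha, b, hb, hab⟩ := hf.2.2 h h' (by simpa using hh.symm)
        rw [hcon a ha] at hab
        rcases hN' b hab with rfl | rfl | rfl <;> tauto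
      have : ∀ (i : Fin 5), ∃ a b c d : Fin 5, a ≠ i ∧ b ≠ i ∧ c ≠ i ∧ d ≠ i ∧ a ≠ b ∧ a ≠ c ∧ a ≠ d ∧
        b ≠ c ∧ b ≠ d ∧ c ≠ d := by decide
      obtain ⟨a, b, c, d, h1, h2, h3, h4, h5, h6, h7, h8, h9, h10⟩ := this h
      have ha := hx a h1
      have hb := hx b h2
      have hc := hx c h3
      have hd := hx d h4
      grind
    rcases yd_gen hpq hp hq hr hN hf hs with ⟨g, hg⟩ | ⟨i, j, k, hij, hik, hjk, hwi, hri, hpj, hqk⟩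
    · exact hG.1 g hg
    · obtain ⟨d, e, hde, d1, d2, d3, e1, e2, e3⟩ := K5_two i j k
      have hij' := hij.ne
      have hik' := hik.ne
      have hjk' := hjk.ne
      have hpi : p ∉ f i := fun h => hij' (hdis _ _ p h hpj)
      have hqi : q ∉ f i := fun h => hik' (hdis _ _ q h hqk)
      have hqj : q ∉ f j := fun h => hjk' (hdis _ _ q h hqk)
      have hpk : p ∉ f k := fun h => hjk' (hdis _ _ p hpj h)
      have conn : ∀ h, h ≠ j ∨ True → (p ∉ f h ∨ q ∉ f h) → PC G (f h) := by
        intro h _ hpq'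
        refine ⟨(hf.1 h).1, fun S hS hc => (hf.1 h).2 S hS ?_⟩
        rintro x hx hxS y hy (hxy | ⟨rfl, rfl⟩ | ⟨rfl, rfl⟩)
        · exact hc x hx hxS y hy hxy
        · tauto
        · tauto
      have hwne : ∀ h, h ≠ i → w ∉ f h := fun h hh hw => hh (hdis _ _ w hw hwi)
      have adj : ∀ h h', h ≠ h' → h' ≠ i → h' ≠ j → h' ≠ k → ∃ a ∈ f h, ∃ b ∈ f h',
          a ≠ w ∧ G.Adj a b := by
        intro h h' hh h1 h2 h3
        obtain ⟨a, ha, b, hb, hab⟩ := hf.2.2 h h' (by simpa using hh)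
        refine ⟨a, ha, b, hb, ?_, ?_⟩
        · rintro rfl
          rcases hN' b hab with rfl | rfl | rfl
          · exact h2 (hdis _ _ _ hb hpj)
          · exact h3 (hdis _ _ _ hb hqk)
          · exact h1 (hdis _ _ _ hb hri)
        · rcases hab with hab | ⟨rfl, rfl⟩ | ⟨rfl, rfl⟩
          · exact hab
          · exact absurd (hdis _ _ _ hb hqk) h3
          · exact absurd (hdis _ _ _ hb hpj) h2
      have cI : PC G (f i \ {w}) := by
        refine ⟨⟨r, hri, hr.ne.symm⟩, ?_⟩
        rintro S ⟨a, ⟨ha, haw⟩, haS⟩ hc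
        have := (hf.1 i).2 {z | (z ≠ w ∧ z ∈ S) ∨ (z = w ∧ r ∈ S)} ⟨a, ha, Or.inl ⟨haw, haS⟩⟩ (by
          rintro x hx hxS y hy hxy
          have hxy' : G.Adj x y := by
            rcases hxy with hxy | ⟨rfl, rfl⟩ | ⟨rfl, rfl⟩
            · exact hxy
            · exact absurd hx hpi
            · exact absurd hx hqi
          rcases hxS with ⟨hxw, hxS⟩ | ⟨rfl, hrS⟩
          · by_cases hyw : y = w
            · subst hyw
              refine Or.inr ⟨rfl, ?_⟩
              rcases hN _ hxy'.symm with rfl | rfl | rfl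
              · exact absurd hx hpi
              · exact absurd hx hqi
              · exact hxS
            · exact Or.inl ⟨hyw, hc x ⟨hx, hxw⟩ hxS y ⟨hy, hyw⟩ hxy'⟩
          · rcases hN _ hxy' with rfl | rfl | rfl
            · exact absurd hy hpi
            · exact absurd hy hqi
            · exact Or.inl ⟨hr.ne.symm, hrS⟩)
        rintro x ⟨hx, hxw⟩
        rcases this x hx with h | h
        · exact h.2
        · exact absurd h.1 hxw
      obtain ⟨g, hg⟩ := mkK33 (G := G) ![f i \ {w}, f j, f k] ![{w}, f d, f e]
        (by
          intro a
          fin_cases a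
          · exact cI
          · exact conn j (Or.inr trivial) (Or.inr hqj)
          · exact conn k (Or.inr trivial) (Or.inl hpk))
        (by
          intro a
          fin_cases a
          · exact pc_singleton G w
          · exact conn d (Or.inr trivial) (Or.inl fun h => d2 (hdis _ _ p h hpj))
          · exact conn e (Or.inr trivial) (Or.inl fun h => e2 (hdis _ _ p h hpj)))
        (by
          intro a b hab x hx hx'
          fin_cases a <;> fin_cases b <;> simp at hab hx hx' <;> grind)
        (by
          intro a b hab x hx hx'
          fin_cases a <;> fin_cases b <;> simp at hab hx hx' <;> grind)
        (by
          intro a b x hx hx'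
          fin_cases a <;> fin_cases b <;> simp at hx hx' <;> grind)
        (by
          have hg2 : ∀ h h', h ≠ h' → h' ≠ i → h' ≠ j → h' ≠ k → ∃ a ∈ f h, ∃ b ∈ f h', G.Adj a b := by
            intro h h' a1 a2 a3 a4
            obtain ⟨a, ha, b, hb, _, hab⟩ := adj h h' a1 a2 a3 a4
            exact ⟨a, ha, b, hb, hab⟩
          have hg3 : ∀ h', i ≠ h' → h' ≠ i → h' ≠ j → h' ≠ k →
              ∃ a ∈ f i \ {w}, ∃ b ∈ f h', G.Adj a b := by
            intro h' a1 a2 a3 a4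
            obtain ⟨a, ha, b, hb, haw, hab⟩ := adj i h' a1 a2 a3 a4
            exact ⟨a, ⟨ha, haw⟩, b, hb, hab⟩
          intro a b
          fin_cases a <;> fin_cases b
          · exact ⟨r, ⟨hri, hr.ne.symm⟩, w, rfl, hr.symm⟩
          · exact hg3 d d1.symm d1 d2 d3
          · exact hg3 e e1.symm e1 e2 e3
          · exact ⟨p, hpj, w, rfl, hp.symm⟩
          · exact hg2 j d d2.symm d1 d2 d3
          · exact hg2 j e e2.symm e1 e2 e3
          · exact ⟨q, hqk, w, rfl, hq.symm⟩
          · exact hg2 k d d3.symm d1 d2 d3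
          · exact hg2 k e e3.symm e1 e2 e3)
      exact hG.2 g hg
  · intro f hf
    have hdis : ∀ i j x, x ∈ f i → x ∈ f j → i = j := by
      intro i j x hi hj
      by_contra hij
      exact hf.2.1 i j hij x hi hj
    by_cases hs : ∀ h, w ∈ f h → ∃ z ∈ f h, z ≠ w
    · rcases yd_gen hpq hp hq hr hN hf hs with ⟨g, hg⟩ | ⟨i, j, k, hij, hik, hjk, _⟩
      · exact hG.2 g hg
      · exact K33_tri i j k hij hik hjk
    · push Not at hs
      obtain ⟨h, hw, hcon⟩ := hs
      have hx : ∀ h', K33.Adj h h' → p ∈ f h' ∨ q ∈ f h' ∨ r ∈ f h' := by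
        intro h' hh
        obtain ⟨a, ha, b, hb, hab⟩ := hf.2.2 h h' hh
        rw [hcon a ha] at hab
        rcases hN' b hab with rfl | rfl | rfl <;> tauto
      have : ∃ a b c, K33.Adj h a ∧ K33.Adj h b ∧ K33.Adj h c ∧ a ≠ b ∧ a ≠ c ∧ b ≠ c := by
        rcases h with h | h
        · exact ⟨Sum.inr 0, Sum.inr 1, Sum.inr 2, by simp⟩
        · exact ⟨Sum.inl 0, Sum.inl 1, Sum.inl 2, by simp⟩
      obtain ⟨a, b, c, ha, hb, hc, hab, hac, hbc⟩ := this
      have xa := hx a ha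
      have xb := hx b hb
      have xc := hx c hc
      have key : ∃ j k, K33.Adj h j ∧ K33.Adj h k ∧ j ≠ k ∧ p ∈ f j ∧ q ∈ f k := by
        grind
      obtain ⟨j, k, hj, hk, hjk, hpj, hqk⟩ := key
      refine hG.2 f (yd_direct hpq hp hq hf ?_ ?_)
      · intro l h1 h2
        exact absurd ((hdis j l p hpj h1).trans (hdis l k q h2 hqk)) hjk
      · intro l l' hl h1 h2
        obtain rfl := hdis l j p h1 hpj
        obtain rfl := hdis l' k q h2 hqk
        exact absurd hl (K33_tri h _ _ hj hk)

open Classical in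
theorem contr_card {V : Type*} [Fintype V] {G : SimpleGraph V} {w t : V} (hwt : G.Adj w t) :
    G.edgeFinset.card ≤ (contr G w t).edgeFinset.card + 1 +
      (G.neighborFinset w ∩ G.neighborFinset t).card := by
  set X : Finset V := (G.neighborFinset w \ G.neighborFinset t).erase t with hX
  have hsub : (G.edgeFinset \ G.incidenceFinset w) ∪ X.image (fun v => s(t, v)) ⊆
      (contr G w t).edgeFinset := by
    intro e he
    rw [Finset.mem_union] at he
    rcases he with he | he
    · induction e with
      | _ a b =>
        simp only [Finset.mem_sdiff, mem_edgeFinset, mem_edgeSet, mem_incidenceFinset,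
          mk'_mem_incidenceSet_iff, not_and, not_or] at he
        have h2 := he.2 he.1
        simp only [mem_edgeFinset, mem_edgeSet]
        exact ⟨fun e => h2.1 e.symm, fun e => h2.2 e.symm, he.1.ne, Or.inl he.1⟩
    · rw [Finset.mem_image] at he
      obtain ⟨v, hv, rfl⟩ := he
      simp only [hX, Finset.mem_erase, Finset.mem_sdiff, mem_neighborFinset] at hv
      simp only [mem_edgeFinset, mem_edgeSet]
      exact ⟨hwt.ne.symm, hv.2.1.ne.symm, fun e => hv.1 e.symm, Or.inr (Or.inl ⟨rfl, hv.2.1⟩)⟩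
  have hdisj : Disjoint (G.edgeFinset \ G.incidenceFinset w) (X.image (fun v => s(t, v))) := by
    rw [Finset.disjoint_left]
    intro e he he'
    rw [Finset.mem_image] at he'
    obtain ⟨v, hv, rfl⟩ := he'
    simp only [hX, Finset.mem_erase, Finset.mem_sdiff, mem_neighborFinset] at hv
    simp only [Finset.mem_sdiff, mem_edgeFinset, mem_edgeSet] at he
    exact hv.2.2 he.1
  have h1 := Finset.card_le_card hsub
  rw [Finset.card_union_of_disjoint hdisj] at h1
  rw [Finset.card_image_of_injective _ (fun a b h => Sym2.congr_right.1 h)] at h1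
  have h2 : G.edgeFinset.card ≤ (G.edgeFinset \ G.incidenceFinset w).card + G.degree w := by
    rw [← card_incidenceFinset_eq_degree]
    have := Finset.le_card_sdiff (G.incidenceFinset w) G.edgeFinset
    omega
  have h3 : X.card + 1 + (G.neighborFinset w ∩ G.neighborFinset t).card = G.degree w := by
    have ht : t ∈ G.neighborFinset w \ G.neighborFinset t := by
      simp [hwt]
    rw [hX, Finset.card_erase_add_one ht, Finset.card_sdiff_add_card_inter]
    rfl
  omega

theorem K5_of_nbhd {V : Type*} [DecidableEq V] {G : SimpleGraph V} (v : V) (N : Finset V)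
    (hN : ∀ u ∈ N, G.Adj v u) (h4 : 4 ≤ N.card) (h5 : N.card ≤ 5)
    (hd : ∀ u ∈ N, ∃ C ⊆ N, C.card = 3 ∧ ∀ c ∈ C, G.Adj u c) : ∃ f, Model G K5 f := by
  have two : ∀ u ∈ N, ∀ D ⊆ N, u ∉ D → D.card + 3 = N.card → ∃ d ∈ D, G.Adj u d := by
    intro u hu D hD huD hc
    obtain ⟨C, hC, hC3, hCa⟩ := hd u hu
    by_contra hno
    push Not at hno
    have hdis : Disjoint C D := by
      rw [Finset.disjoint_left]
      intro x hx hx'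
      exact hno x hx' (hCa x hx)
    have hsub : C ∪ D ⊆ N.erase u := by
      intro x hx
      rcases Finset.mem_union.1 hx with hx | hx
      · exact Finset.mem_erase.2 ⟨(hCa x hx).ne.symm, hC hx⟩
      · exact Finset.mem_erase.2 ⟨fun e => huD (e ▸ hx), hD hx⟩
    have := Finset.card_le_card hsub
    rw [Finset.card_union_of_disjoint hdis, Finset.card_erase_of_mem hu] at this
    omega
  have sadj : ∀ a b : V, G.Adj a b → ∃ x ∈ ({a} : Set V), ∃ y ∈ ({b} : Set V), G.Adj x y :=
    fun a b h => ⟨a, rfl, b, rfl, h⟩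
  have sne : ∀ a b : V, a ≠ b → ∀ x ∈ ({a} : Set V), x ∉ ({b} : Set V) := by
    rintro a b h x rfl hx
    exact h hx
  have hcard : N.card = 4 ∨ N.card = 5 := by omega
  rcases hcard with h | h
  · have one : ∀ u ∈ N, ∀ d ∈ N, u ≠ d → G.Adj u d := by
      intro u hu d hdN hne
      obtain ⟨x, hx, hxa⟩ := two u hu {d} (by simpa using hdN) (by simpa using hne) (by simp [h])
      rw [Finset.mem_singleton] at hx
      exact hx ▸ hxa
    obtain ⟨a, b, c, d, hab, hac, had, hbc, hbd, hcd, rfl⟩ := Finset.card_eq_four.1 h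
    have ha := hN a (by simp)
    have hb := hN b (by simp)
    have hc := hN c (by simp)
    have hd' := hN d (by simp)
    exact mkK5 {v} {a} {b} {c} {d} (pc_singleton _ _) (pc_singleton _ _) (pc_singleton _ _)
      (pc_singleton _ _) (pc_singleton _ _) (sne _ _ ha.ne) (sne _ _ hb.ne) (sne _ _ hc.ne)
      (sne _ _ hd'.ne) (sne _ _ hab) (sne _ _ hac) (sne _ _ had) (sne _ _ hbc) (sne _ _ hbd)
      (sne _ _ hcd) (sadj _ _ ha) (sadj _ _ hb) (sadj _ _ hc) (sadj _ _ hd')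
      (sadj _ _ (one _ (by simp) _ (by simp) hab)) (sadj _ _ (one _ (by simp) _ (by simp) hac))
      (sadj _ _ (one _ (by simp) _ (by simp) had)) (sadj _ _ (one _ (by simp) _ (by simp) hbc))
      (sadj _ _ (one _ (by simp) _ (by simp) hbd)) (sadj _ _ (one _ (by simp) _ (by simp) hcd))
  · have one : ∀ u ∈ N, ∀ d ∈ N, ∀ e ∈ N, u ≠ d → u ≠ e → d ≠ e → G.Adj u d ∨ G.Adj u e := by
      intro u hu d hdN e heN hne hne' hde
      obtain ⟨x, hx, hxa⟩ := two u hu {d, e} (by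
        intro x hx
        simp at hx
        rcases hx with rfl | rfl <;> assumption) (by simp [hne, hne'])
        (by rw [Finset.card_pair hde, h])
      simp only [Finset.mem_insert, Finset.mem_singleton] at hx
      rcases hx with rfl | rfl
      · exact Or.inl hxa
      · exact Or.inr hxa
    have fin : ∀ p q r s z, p ∈ N → q ∈ N → r ∈ N → s ∈ N → z ∈ N → p ≠ q → p ≠ r → p ≠ s → p ≠ z →
        q ≠ r → q ≠ s → q ≠ z → r ≠ s → r ≠ z → s ≠ z → G.Adj p r → G.Adj r q → G.Adj p s →
        G.Adj p z → G.Adj q s → G.Adj q z → G.Adj s z → ∃ f, Model G K5 f := by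
      intro p q r s z hp hq hr hs hz n1 n2 n3 n4 n5 n6 n7 n8 n9 n10 a1 a2 a3 a4 a5 a6 a7
      have hp' := hN p hp
      have hq' := hN q hq
      have hr' := hN r hr
      have hs' := hN s hs
      have hz' := hN z hz
      have pne : ∀ a b c : V, a ≠ c → b ≠ c → ∀ x ∈ (insert a {b} : Set V), x ∉ ({c} : Set V) := by
        rintro a b c h1 h2 x (rfl | rfl) hx
        · exact h1 hx
        · exact h2 hx
      refine mkK5 (insert p {r}) {v} {q} {s} {z} (pc_insert (pc_singleton _ r) rfl a1)
        (pc_singleton _ _) (pc_singleton _ _)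
        (pc_singleton _ _) (pc_singleton _ _) (pne _ _ _ hp'.ne.symm hr'.ne.symm)
        (pne _ _ _ n1 n5.symm) (pne _ _ _ n3 n8) (pne _ _ _ n4 n9)
        (sne _ _ hq'.ne) (sne _ _ hs'.ne) (sne _ _ hz'.ne) (sne _ _ n6) (sne _ _ n7) (sne _ _ n10)
        ⟨p, by simp, v, rfl, hp'.symm⟩ ⟨r, by simp, q, rfl, a2⟩ ⟨p, by simp, s, rfl, a3⟩
        ⟨p, by simp, z, rfl, a4⟩ (sadj _ _ hq') (sadj _ _ hs') (sadj _ _ hz') (sadj _ _ a5)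
        (sadj _ _ a6) (sadj _ _ a7)
    have fin2 : ∀ p q r s z, p ∈ N → q ∈ N → r ∈ N → s ∈ N → z ∈ N → p ≠ q → p ≠ r → p ≠ s → p ≠ z →
        q ≠ r → q ≠ s → q ≠ z → r ≠ s → r ≠ z → s ≠ z → G.Adj p r → G.Adj r q → G.Adj p s →
        G.Adj p z → G.Adj q s → G.Adj q z → ∃ f, Model G K5 f := by
      intro p q r s z hp hq hr hs hz n1 n2 n3 n4 n5 n6 n7 n8 n9 n10 a1 a2 a3 a4 a5 a6
      by_cases hsz : G.Adj s z
      · exact fin p q r s z hp hq hr hs hz n1 n2 n3 n4 n5 n6 n7 n8 n9 n10 a1 a2 a3 a4 a5 a6 hsz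
      · have hrz : G.Adj r z := by
          rcases one z hz s hs r hr n10.symm n9.symm n8.symm with h | h
          · exact absurd h.symm hsz
          · exact h.symm
        exact fin p q s r z hp hq hs hr hz n1 n3 n2 n4 n6 n5 n7 n8.symm n10 n9 a3 a5.symm a1 a4
          a2.symm a6 hrz
    have fin3 : ∀ p q, p ∈ N → q ∈ N → p ≠ q → (∀ x ∈ N, x ≠ p → x ≠ q → G.Adj p x ∧ G.Adj q x) →
        ∃ f, Model G K5 f := by
      intro p q hp hq hpq hx
      have hc : ((N.erase p).erase q).card = 3 := by
        rw [Finset.card_erase_of_mem (by simp [hq, hpq.symm]), Finset.card_erase_of_mem hp, h]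
      obtain ⟨r, s, z, h1, h2, h3, he⟩ := Finset.card_eq_three.1 hc
      have hr : r ∈ (N.erase p).erase q := by rw [he]; simp
      have hs : s ∈ (N.erase p).erase q := by rw [he]; simp
      have hz : z ∈ (N.erase p).erase q := by rw [he]; simp
      simp only [Finset.mem_erase] at hr hs hz
      have kr := hx r hr.2.2 hr.2.1 hr.1
      have ks := hx s hs.2.2 hs.2.1 hs.1
      have kz := hx z hz.2.2 hz.2.1 hz.1
      exact fin2 p q r s z hp hq hr.2.2 hs.2.2 hz.2.2 hpq (Ne.symm hr.2.1) (Ne.symm hs.2.1)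
        (Ne.symm hz.2.1) (Ne.symm hr.1) (Ne.symm hs.1) (Ne.symm hz.1) h1 h2 h3 kr.1 kr.2.symm ks.1
        kz.1 ks.2 kz.2
    by_cases hall : ∃ p ∈ N, ∃ q ∈ N, p ≠ q ∧ ¬ G.Adj p q
    · obtain ⟨p, hp, q, hq, hpq, hna⟩ := hall
      refine fin3 p q hp hq hpq ?_
      intro x hx hxp hxq
      constructor
      · rcases one p hp x hx q hq (Ne.symm hxp) hpq hxq with h | h
        · exact h
        · exact absurd h hna
      · rcases one q hq x hx p hp (Ne.symm hxq) hpq.symm hxp with h | h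
        · exact h
        · exact absurd h.symm hna
    · push Not at hall
      obtain ⟨p, hp, q, hq, hpq⟩ := Finset.one_lt_card.1 (show 1 < N.card by omega)
      exact fin3 p q hp hq hpq (fun x hx h1 h2 =>
        ⟨hall p hp x hx (Ne.symm h1), hall q hq x hx (Ne.symm h2)⟩)

open Classical in
theorem mader {V : Type*} [Fintype V] : ∀ (n : ℕ) (G : SimpleGraph V) (S : Finset V),
    S.card = n → 3 ≤ n → (∀ a b, G.Adj a b → a ∈ S) → (∀ f, ¬ Model G K5 f) →
    G.edgeFinset.card + 6 ≤ 3 * n := by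
  intro n
  induction n with
  | zero => intros; omega
  | succ n ih =>
    intro G S hS hn hsup hG
    by_contra hcon
    push Not at hcon
    have degle : ∀ G : SimpleGraph V, (∀ a b, G.Adj a b → a ∈ S) → ∀ v ∈ S, G.degree v ≤ n := by
      intro G hsup v hv
      have : G.neighborFinset v ⊆ S.erase v := by
        intro u hu
        rw [mem_neighborFinset] at hu
        exact Finset.mem_erase.2 ⟨hu.ne.symm, hsup _ _ hu.symm⟩
      have := Finset.card_le_card this
      rw [Finset.card_erase_of_mem hv, hS] at this
      simpa using this
    have sumdeg : ∀ G : SimpleGraph V, (∀ a b, G.Adj a b → a ∈ S) →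
        ∑ v ∈ S, G.degree v = 2 * G.edgeFinset.card := by
      intro G hsup
      rw [← sum_degrees_eq_twice_card_edges]
      apply Finset.sum_subset (Finset.subset_univ _)
      intro v _ hv
      by_contra hne
      obtain ⟨u, hu⟩ := (G.degree_pos_iff_exists_adj v).1 (Nat.pos_of_ne_zero hne)
      exact hv (hsup _ _ hu)
    rcases Nat.lt_or_ge n 3 with hn3 | hn3
    · have h1 := sumdeg G hsup
      have h2 := Finset.sum_le_card_nsmul S (fun v => G.degree v) n (degle G hsup)
      have : n = 2 := by omega
      subst this
      simp only [hS, smul_eq_mul] at h2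
      omega
    obtain ⟨s, hsG, hs⟩ := Finset.exists_subset_card_eq (s := G.edgeFinset) (n := 3 * (n + 1) - 5)
      (by omega)
    obtain ⟨G0, hle, hcard⟩ : ∃ G0 : SimpleGraph V, G0 ≤ G ∧ G0.edgeFinset.card = 3 * (n + 1) - 5 := by
      set G0 := fromEdgeSet (s : Set (Sym2 V)) with hG0
      have hle : G0 ≤ G := by
        intro a b hab
        rw [hG0, fromEdgeSet_adj] at hab
        have := hsG (by exact_mod_cast hab.1)
        simpa using this
      have hcard : G0.edgeFinset.card = 3 * (n + 1) - 5 := by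
        rw [← hs]
        congr 1
        ext e
        rw [mem_edgeFinset, hG0, edgeSet_fromEdgeSet]
        constructor
        · intro h
          exact_mod_cast h.1
        · intro h
          refine ⟨by exact_mod_cast h, ?_⟩
          have := hsG h
          rw [mem_edgeFinset] at this
          exact G.not_isDiag_of_mem_edgeSet this
      exact ⟨G0, hle, by convert hcard⟩
    have hsup0 : ∀ a b, G0.Adj a b → a ∈ S := fun a b h => hsup a b (hle h)
    have hG0m : ∀ f, ¬ Model G0 K5 f := fun f hf => hG f (hf.mono hle)
    have hcommon : ∀ w t, G0.Adj w t → 3 ≤ (G0.neighborFinset w ∩ G0.neighborFinset t).card := by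
      intro w t hwt
      by_contra hlt
      have h1 := contr_card hwt
      have h2 := ih (contr G0 w t) (S.erase w)
        (by rw [Finset.card_erase_of_mem (hsup0 _ _ hwt), hS]; rfl) hn3
        (by
          rintro a b ⟨h1, h2, h3, h4⟩
          refine Finset.mem_erase.2 ⟨h1, ?_⟩
          rcases h4 with h4 | ⟨rfl, h4⟩ | ⟨rfl, h4⟩
          · exact hsup0 _ _ h4
          · exact hsup0 _ _ hwt.symm
          · exact hsup0 _ _ h4.symm)
        (by
          intro f hf
          obtain ⟨g, hg⟩ := contr_model hwt K5_nbr hf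
          exact hG0m g hg)
      omega
    have hv : ∃ v ∈ S, G0.degree v ≤ 5 := by
      by_contra hno
      push Not at hno
      have h1 := sumdeg G0 hsup0
      have h2 := Finset.card_nsmul_le_sum S (fun v => G0.degree v) 6 (fun v hv => hno v hv)
      simp only [hS, smul_eq_mul] at h2
      omega
    obtain ⟨v, hvS, hv5⟩ := hv
    have hv0 : 0 < G0.degree v := by
      by_contra h0
      have h2 := ih G0 (S.erase v)
        (by rw [Finset.card_erase_of_mem hvS, hS]; rfl) hn3
        (by
          intro a b hab
          refine Finset.mem_erase.2 ⟨?_, hsup0 _ _ hab⟩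
          rintro rfl
          exact h0 ((G0.degree_pos_iff_exists_adj a).2 ⟨b, hab⟩)) hG0m
      omega
    obtain ⟨u, hu⟩ := (G0.degree_pos_iff_exists_adj v).1 hv0
    have hv4 : 4 ≤ G0.degree v := by
      have h1 := hcommon v u hu
      have h2 : (G0.neighborFinset v ∩ G0.neighborFinset u) ⊆ (G0.neighborFinset v).erase u := by
        intro x hx
        simp only [Finset.mem_inter, mem_neighborFinset] at hx
        exact Finset.mem_erase.2 ⟨hx.2.ne.symm, by simpa using hx.1⟩
      have h3 := Finset.card_le_card h2
      rw [Finset.card_erase_of_mem (by simpa using hu), card_neighborFinset_eq_degree] at h3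
      omega
    obtain ⟨f, hf⟩ := K5_of_nbhd (G := G0) v (G0.neighborFinset v) (fun u hu => by simpa using hu)
      (by simpa using hv4) (by simpa using hv5) (by
        intro x hx
        obtain ⟨C, hC, hC3⟩ := Finset.exists_subset_card_eq (hcommon v x (by simpa using hx))
        refine ⟨C, fun c hc => (Finset.mem_inter.1 (hC hc)).1, hC3, fun c hc => ?_⟩
        simpa using (Finset.mem_inter.1 (hC hc)).2)
    exact hG0m f hf

/-- restrict the edges to `U` -/
def res {V : Type*} (G : SimpleGraph V) (U : Set V) : SimpleGraph V where
  Adj a b := G.Adj a b ∧ a ∈ U ∧ b ∈ U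
  symm := ⟨fun _ _ h => ⟨h.1.symm, h.2.2, h.2.1⟩⟩
  loopless := ⟨fun _ h => h.1.ne rfl⟩

theorem res_le {V : Type*} (G : SimpleGraph V) (U : Set V) : res G U ≤ G := fun _ _ h => h.1

theorem res_reach_mem {V : Type*} {G : SimpleGraph V} {U : Set V} {p z : V}
    (h : (res G U).Reachable p z) (hp : p ∈ U) : z ∈ U :=
  reach_closed h U hp (fun _ _ _ hxy => hxy.2.2)

theorem link {V : Type*} {G : SimpleGraph V} {U U' : Set V} {a b : V} (hab : ¬ G.Adj a b)
    (hne : a ≠ b) (hU : ∀ x ∈ U', x = a ∨ x = b ∨ x ∈ U)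
    (h : (res G U').Reachable a b) :
    ∃ p ∈ U, ∃ q ∈ U, G.Adj a p ∧ G.Adj b q ∧ (res G U).Reachable p q := by
  by_contra hcon
  push Not at hcon
  have := reach_closed h {z | z = a ∨ (z ∈ U ∧ ∃ p ∈ U, G.Adj a p ∧ (res G U).Reachable p z)}
    (Or.inl rfl) (by
      rintro x hx y ⟨hxy, _, hy⟩
      rcases hU y hy with rfl | rfl | hyU
      · exact Or.inl rfl
      · rcases hx with rfl | ⟨hxU, p, hp, hap, hpx⟩
        · exact absurd hxy hab
        · exact absurd hpx (hcon p hp x hxU hap hxy.symm)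
      · rcases hx with rfl | ⟨hxU, p, hp, hap, hpx⟩
        · exact Or.inr ⟨hyU, y, hyU, hxy, Reachable.refl _⟩
        · refine Or.inr ⟨hyU, p, hp, hap, hpx.trans ?_⟩
          exact SimpleGraph.Adj.reachable (G := res G U) ⟨hxy, hxU, hyU⟩)
  rcases this with h | ⟨hb, p, hp, hap, hpb⟩
  · exact hne h.symm
  · -- the last vertex before b
    have h2 := reach_closed h {z | z = a ∨ (z ≠ b ∧ z ∈ U ∧ ∃ p ∈ U, G.Adj a p ∧ (res G U).Reachable p z)}
      (Or.inl rfl) (by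
        rintro x hx y ⟨hxy, _, hy⟩
        by_cases hyb : y = b
        · subst hyb
          rcases hx with rfl | ⟨_, hxU, p, hp, hap, hpx⟩
          · exact absurd hxy hab
          · exact absurd hpx (hcon p hp x hxU hap hxy.symm)
        · rcases hU y hy with rfl | rfl | hyU
          · exact Or.inl rfl
          · exact absurd rfl hyb
          · rcases hx with rfl | ⟨_, hxU, p, hp, hap, hpx⟩
            · exact Or.inr ⟨hyb, hyU, y, hyU, hxy, Reachable.refl _⟩
            · refine Or.inr ⟨hyb, hyU, p, hp, hap, hpx.trans ?_⟩
              exact SimpleGraph.Adj.reachable (G := res G U) ⟨hxy, hxU, hyU⟩)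
    rcases h2 with h2 | h2
    · exact hne h2.symm
    · exact h2.1 rfl

theorem cut3 {V : Type*} {G : SimpleGraph V} (hG : Pl G) (B : Set V) (t a : V) (w : Fin 3 → V)
    (hinj : ∀ i j, i ≠ j → w i ≠ w j) (hst : ∀ i j, ¬ G.Adj (w i) (w j))
    (hta : G.Adj t a) (ht : ∀ i, G.Adj t (w i)) (ha : ∀ i, G.Adj a (w i))
    (h01 : (res G (B \ {t, a, w 2})).Reachable (w 0) (w 1))
    (h12 : (res G (B \ {t, a, w 0})).Reachable (w 1) (w 2))
    (h20 : (res G (B \ {t, a, w 1})).Reachable (w 2) (w 0)) : False := by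
  set U : Set V := B \ {t, a, w 0, w 1, w 2} with hU
  have n01 := hinj 0 1 (by decide)
  have n12 := hinj 1 2 (by decide)
  have n20 := hinj 2 0 (by decide)
  obtain ⟨p0, hp0, q1, hq1, e0, e1, r01⟩ := link (U := U) (hst 0 1) n01 (by
    intro x hx
    simp only [hU, Set.mem_sdiff, Set.mem_insert_iff, Set.mem_singleton_iff] at hx ⊢
    tauto) h01
  obtain ⟨p1, hp1, q2, hq2, e1', e2, r12⟩ := link (U := U) (hst 1 2) n12 (by
    intro x hx
    simp only [hU, Set.mem_sdiff, Set.mem_insert_iff, Set.mem_singleton_iff] at hx ⊢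
    tauto) h12
  obtain ⟨p2, hp2, q0, hq0, e2', e0', r20⟩ := link (U := U) (hst 2 0) n20 (by
    intro x hx
    simp only [hU, Set.mem_sdiff, Set.mem_insert_iff, Set.mem_singleton_iff] at hx ⊢
    tauto) h20
  have notU : t ∉ U ∧ a ∉ U ∧ ∀ i, w i ∉ U := by
    refine ⟨by simp [hU], by simp [hU], ?_⟩
    intro i
    fin_cases i <;> simp [hU]
  -- no component touches all three
  have noall : ∀ p ∈ U, ¬ ∀ i, ∃ z, (res G U).Reachable p z ∧ G.Adj (w i) z := by
    intro p hp hall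
    have hmem : ∀ z, (res G U).Reachable p z → z ∈ U := fun z hz => res_reach_mem hz hp
    obtain ⟨f, hf⟩ := mkK33 (G := G) (fun i => {w i}) ![{t}, {a}, {z | (res G U).Reachable p z}]
      (fun i => pc_singleton _ _)
      (by
        intro i
        fin_cases i
        · exact pc_singleton _ _
        · exact pc_singleton _ _
        · exact pc_reach (res_le _ _) _)
      (by
        rintro i j hij x rfl hx
        exact hinj i j hij hx)
      (by
        have hta' := hta.ne
        intro i j hij x hx hx'
        fin_cases i <;> fin_cases j <;> simp at hij hx hx' <;> grind)
      (by
        intro i j x hx hx'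
        have h1 := (ht i).ne
        have h2 := (ha i).ne
        fin_cases j <;> simp at hx hx' <;> grind)
      (by
        intro i j
        fin_cases j
        · exact ⟨w i, rfl, t, rfl, (ht i).symm⟩
        · exact ⟨w i, rfl, a, rfl, (ha i).symm⟩
        · obtain ⟨z, hz, hz'⟩ := hall i
          exact ⟨w i, rfl, z, hz, hz'⟩)
    exact hG.2 f hf
  have d1 : ¬ (res G U).Reachable p0 p1 := fun h => noall p0 hp0 (by
    intro i
    fin_cases i
    · exact ⟨p0, Reachable.refl _, e0⟩
    · exact ⟨q1, r01, e1⟩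
    · exact ⟨q2, h.trans r12, e2⟩)
  have d2 : ¬ (res G U).Reachable p1 p2 := fun h => noall p1 hp1 (by
    intro i
    fin_cases i
    · exact ⟨q0, h.trans r20, e0'⟩
    · exact ⟨p1, Reachable.refl _, e1'⟩
    · exact ⟨q2, r12, e2⟩)
  have d3 : ¬ (res G U).Reachable p2 p0 := fun h => noall p2 hp2 (by
    intro i
    fin_cases i
    · exact ⟨q0, r20, e0'⟩
    · exact ⟨q1, h.trans r01, e1⟩
    · exact ⟨p2, Reachable.refl _, e2'⟩)
  have dis : ∀ i j x y, i ≠ j → x ∈ U → y ∈ U → ¬ (res G U).Reachable x y →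
      ∀ z ∈ insert (w i) {z | (res G U).Reachable x z},
        z ∉ insert (w j) {z | (res G U).Reachable y z} := by
    rintro i j x y hij hx hy hxy z (rfl | hz) (hz' | hz')
    · exact hinj i j hij hz'
    · exact notU.2.2 i (res_reach_mem hz' hy)
    · exact notU.2.2 j (hz' ▸ res_reach_mem hz hx)
    · exact hxy (Reachable.trans hz (Reachable.symm hz'))
  have dis1 : ∀ c i x, c ∉ U → c ≠ w i → x ∈ U → ∀ z ∈ ({c} : Set V),
      z ∉ insert (w i) {z | (res G U).Reachable x z} := by
    rintro c i x hc hci hx z rfl (hz | hz)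
    · exact hci hz
    · exact hc (res_reach_mem hz hx)
  obtain ⟨f, hf⟩ := mkK5 (G := G) {t} {a} (insert (w 0) {z | (res G U).Reachable p0 z})
    (insert (w 1) {z | (res G U).Reachable p1 z}) (insert (w 2) {z | (res G U).Reachable p2 z})
    (pc_singleton _ _) (pc_singleton _ _)
    (pc_insert (pc_reach (res_le _ _) p0) (Reachable.refl _) e0)
    (pc_insert (pc_reach (res_le _ _) p1) (Reachable.refl _) e1')
    (pc_insert (pc_reach (res_le _ _) p2) (Reachable.refl _) e2')
    (by
      rintro x rfl hx
      exact hta.ne hx)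
    (dis1 _ _ _ notU.1 (ht 0).ne hp0) (dis1 _ _ _ notU.1 (ht 1).ne hp1)
    (dis1 _ _ _ notU.1 (ht 2).ne hp2)
    (dis1 _ _ _ notU.2.1 (ha 0).ne hp0) (dis1 _ _ _ notU.2.1 (ha 1).ne hp1)
    (dis1 _ _ _ notU.2.1 (ha 2).ne hp2)
    (dis 0 1 _ _ (by decide) hp0 hp1 d1)
    (dis 0 2 _ _ (by decide) hp0 hp2 (fun h => d3 h.symm))
    (dis 1 2 _ _ (by decide) hp1 hp2 d2)
    ⟨t, rfl, a, rfl, hta⟩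
    ⟨t, rfl, w 0, by simp, ht 0⟩ ⟨t, rfl, w 1, by simp, ht 1⟩ ⟨t, rfl, w 2, by simp, ht 2⟩
    ⟨a, rfl, w 0, by simp, ha 0⟩ ⟨a, rfl, w 1, by simp, ha 1⟩ ⟨a, rfl, w 2, by simp, ha 2⟩
    ⟨q1, Or.inr r01, w 1, by simp, e1.symm⟩
    ⟨w 0, by simp, q0, Or.inr r20, e0'⟩
    ⟨q2, Or.inr r12, w 2, by simp, e2.symm⟩
  exact hG.1 f hf

open Classical in
structure Hyp {V : Type*} (μ : ℕ) (T W : Finset V) (x y : V) (G : SimpleGraph V) : Prop where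
  disj : ∀ v ∈ T, v ∉ W
  pl : Pl G
  sup : ∀ w ∈ W, ∀ u, G.Adj w u → u ∈ T
  degW : ∀ w ∈ W, 3 ≤ (T.filter (G.Adj w)).card
  xT : x ∈ T
  yT : y ∈ T
  xy : x = y ∨ G.Adj x y
  ex : ∃ t ∈ T, t ≠ x ∧ t ≠ y
  bad : ∀ t ∈ T, t ≠ x → t ≠ y →
    5 * μ + 6 ≤ μ * (T.filter (G.Adj t)).card + (W.filter (G.Adj t)).card

theorem exists_third {V : Type*} [DecidableEq V] (A : Finset V) (h : 3 ≤ A.card) (t a : V) :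
    ∃ u ∈ A, u ≠ t ∧ u ≠ a := by
  by_contra hcon
  push Not at hcon
  have : A ⊆ {t, a} := by
    intro u hu
    by_cases hut : u = t
    · simp [hut]
    · simp [hcon u hu hut]
  have := Finset.card_le_card this
  have := Finset.card_le_two (a := t) (b := a)
  omega

open Classical in
theorem Hyp.cut {V : Type*} {μ : ℕ} {T W : Finset V} {x y : V} {G : SimpleGraph V}
    (h : Hyp μ T W x y G) {t a z o k : V} (ht : t ∈ T) (ha : a ∈ T) (hz : z ∈ W) (ho : o ∈ W)
    (hk : k ∈ W) (hzk : z ≠ k) (hok : o ≠ k) (hta : G.Adj t a)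
    (htk : G.Adj k t) (hak : G.Adj k a)
    (hzo : ¬ (res G (((T ∪ W : Finset V) : Set V) \ {t, a, k})).Reachable z o)
    (hx : ¬ (res G (((T ∪ W : Finset V) : Set V) \ {t, a, k})).Reachable z x)
    (hy : ¬ (res G (((T ∪ W : Finset V) : Set V) \ {t, a, k})).Reachable z y) :
    ∃ T' W' : Finset V, ∃ G', T'.card + W'.card < T.card + W.card ∧ Hyp μ T' W' t a G' := by
  set U : Set V := ((T ∪ W : Finset V) : Set V) \ {t, a, k} with hU
  set D : Set V := {v | (res G U).Reachable z v} with hD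
  have hkT : k ∉ T := fun hh => h.disj k hh hk
  have hzT : z ∉ T := fun hh => h.disj z hh hz
  have hzU : z ∈ U := by
    refine ⟨by simp [hz], ?_⟩
    simp only [Set.mem_insert_iff, Set.mem_singleton_iff, not_or]
    exact ⟨fun e => hzT (e ▸ ht), fun e => hzT (e ▸ ha), hzk⟩
  have hzD : z ∈ D := Reachable.refl _
  have hDU : ∀ v ∈ D, v ∈ U := fun v hv => res_reach_mem hv hzU
  have hDne : ∀ v ∈ D, v ≠ t ∧ v ≠ a ∧ v ≠ k := by
    intro v hv
    have := (hDU v hv).2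
    simpa [not_or] using this
  have hstep : ∀ v ∈ D, ∀ u, G.Adj v u → (u ∈ T ∨ u ∈ W) → u = t ∨ u = a ∨ u = k ∨ u ∈ D := by
    intro v hv u hvu hu
    by_cases h1 : u = t
    · exact Or.inl h1
    by_cases h2 : u = a
    · exact Or.inr (Or.inl h2)
    by_cases h3 : u = k
    · exact Or.inr (Or.inr (Or.inl h3))
    refine Or.inr (Or.inr (Or.inr ?_))
    have huU : u ∈ U := ⟨by simpa using hu, by simp [h1, h2, h3]⟩
    exact Reachable.trans hv (SimpleGraph.Adj.reachable (G := res G U) ⟨hvu, hDU v hv, huU⟩)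
  set T' := T.filter (fun u => u ∈ D ∨ u = t ∨ u = a) with hT'
  set W' := W.filter (fun u => u ∈ D ∨ (u = k ∧ ∃ d ∈ D, G.Adj k d)) with hW'
  have mT : ∀ u, u ∈ T' ↔ u ∈ T ∧ (u ∈ D ∨ u = t ∨ u = a) := fun u => by simp [hT']
  have mW : ∀ u, u ∈ W' ↔ u ∈ W ∧ (u ∈ D ∨ (u = k ∧ ∃ d ∈ D, G.Adj k d)) := fun u => by
    simp only [hW', Finset.mem_filter]
  refine ⟨T', W', res G ((T' ∪ W' : Finset V) : Set V), ?_, ?_⟩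
  · have h1 : T'.card ≤ T.card := Finset.card_filter_le _ _
    have h2 : W'.card < W.card := by
      apply Finset.card_lt_card
      refine Finset.ssubset_iff_of_subset (Finset.filter_subset _ _) |>.2 ⟨o, ho, ?_⟩
      rw [mW]
      rintro ⟨_, h | h⟩
      · exact hzo h
      · exact hok h.1
    omega
  have radj : ∀ u v, (res G ((T' ∪ W' : Finset V) : Set V)).Adj u v ↔
      G.Adj u v ∧ (u ∈ T' ∨ u ∈ W') ∧ (v ∈ T' ∨ v ∈ W') := by
    intro u v
    simp [res]
  have tT' : t ∈ T' := (mT t).2 ⟨ht, by simp⟩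
  have aT' : a ∈ T' := (mT a).2 ⟨ha, by simp⟩
  refine ⟨?_, h.pl.mono (res_le _ _), ?_, ?_, tT', aT', ?_, ?_, ?_⟩
  · intro v hv hv'
    exact h.disj v ((mT v).1 hv).1 ((mW v).1 hv').1
  · intro w hw u hwu
    rw [radj] at hwu
    have huT := h.sup w ((mW w).1 hw).1 u hwu.1
    rcases hwu.2.2 with h1 | h1
    · exact h1
    · exact absurd ((mW u).1 h1).1 (h.disj u huT)
  · intro w hw
    obtain ⟨hwW, hwD | ⟨rfl, d, hdD, hkd⟩⟩ := (mW w).1 hw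
    · refine (h.degW w hwW).trans (Finset.card_le_card ?_)
      intro u hu
      rw [Finset.mem_filter] at hu ⊢
      have huT' : u ∈ T' := by
        rw [mT]
        refine ⟨hu.1, ?_⟩
        rcases hstep w hwD u hu.2 (Or.inl hu.1) with h1 | h1 | h1 | h1
        · exact Or.inr (Or.inl h1)
        · exact Or.inr (Or.inr h1)
        · exact absurd (h1 ▸ hu.1) hkT
        · exact Or.inl h1
      exact ⟨huT', (radj _ _).2 ⟨hu.2, Or.inr hw, Or.inl huT'⟩⟩
    · have hdT : d ∈ T := h.sup _ hwW d hkd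
      have hdT' : d ∈ T' := (mT d).2 ⟨hdT, Or.inl hdD⟩
      have hsub : ({t, a, d} : Finset V) ⊆ T'.filter ((res G ((T' ∪ W' : Finset V) : Set V)).Adj w) := by
        intro u hu
        simp only [Finset.mem_insert, Finset.mem_singleton] at hu
        rw [Finset.mem_filter, radj]
        rcases hu with rfl | rfl | rfl
        · exact ⟨tT', htk, Or.inr hw, Or.inl tT'⟩
        · exact ⟨aT', hak, Or.inr hw, Or.inl aT'⟩
        · exact ⟨hdT', hkd, Or.inr hw, Or.inl hdT'⟩
      have hc : ({t, a, d} : Finset V).card = 3 := by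
        rw [Finset.card_eq_three]
        exact ⟨t, a, d, hta.ne, (hDne d hdD).1.symm, (hDne d hdD).2.1.symm, rfl⟩
      rw [← hc]
      exact Finset.card_le_card hsub
  · exact Or.inr ((radj _ _).2 ⟨hta, Or.inl tT', Or.inl aT'⟩)
  · obtain ⟨u, hu, hut, hua⟩ := exists_third _ (h.degW z hz) t a
    rw [Finset.mem_filter] at hu
    refine ⟨u, (mT u).2 ⟨hu.1, ?_⟩, hut, hua⟩
    rcases hstep z hzD u hu.2 (Or.inl hu.1) with h1 | h1 | h1 | h1
    · exact absurd h1 hut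
    · exact absurd h1 hua
    · exact absurd (h1 ▸ hu.1) hkT
    · exact Or.inl h1
  · intro s hs hst hsa
    obtain ⟨hsT, hsD⟩ := (mT s).1 hs
    have hsD : s ∈ D := by tauto
    have hb := h.bad s hsT (fun e => hx (e ▸ hsD)) (fun e => hy (e ▸ hsD))
    have h1 : T.filter (G.Adj s) ⊆ T'.filter ((res G ((T' ∪ W' : Finset V) : Set V)).Adj s) := by
      intro u hu
      rw [Finset.mem_filter] at hu ⊢
      have huT' : u ∈ T' := by
        rw [mT]
        refine ⟨hu.1, ?_⟩
        rcases hstep s hsD u hu.2 (Or.inl hu.1) with h1 | h1 | h1 | h1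
        · exact Or.inr (Or.inl h1)
        · exact Or.inr (Or.inr h1)
        · exact absurd (h1 ▸ hu.1) hkT
        · exact Or.inl h1
      exact ⟨huT', (radj _ _).2 ⟨hu.2, Or.inl hs, Or.inl huT'⟩⟩
    have h2 : W.filter (G.Adj s) ⊆ W'.filter ((res G ((T' ∪ W' : Finset V) : Set V)).Adj s) := by
      intro u hu
      rw [Finset.mem_filter] at hu ⊢
      have huW' : u ∈ W' := by
        rw [mW]
        refine ⟨hu.1, ?_⟩
        rcases hstep s hsD u hu.2 (Or.inr hu.1) with h1 | h1 | h1 | h1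
        · exact absurd hu.1 (h.disj u (h1 ▸ ht))
        · exact absurd hu.1 (h.disj u (h1 ▸ ha))
        · exact Or.inr ⟨h1, s, hsD, h1 ▸ hu.2.symm⟩
        · exact Or.inl h1
      exact ⟨huW', (radj _ _).2 ⟨hu.2, Or.inl hs, Or.inr huW'⟩⟩
    have h1' := Finset.card_le_card h1
    have h2' := Finset.card_le_card h2
    have h3' := Nat.mul_le_mul_left μ h1'
    omega

open Classical in
theorem Hyp.cut2 {V : Type*} {μ : ℕ} {T W : Finset V} {x y : V} {G : SimpleGraph V}
    (h : Hyp μ T W x y G) {t a z o k : V} (ht : t ∈ T) (ha : a ∈ T) (hz : z ∈ W) (ho : o ∈ W)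
    (hk : k ∈ W) (hzk : z ≠ k) (hok : o ≠ k) (hta : G.Adj t a)
    (htk : G.Adj k t) (hak : G.Adj k a)
    (hzo : ¬ (res G (((T ∪ W : Finset V) : Set V) \ {t, a, k})).Reachable z o) :
    ∃ T' W' : Finset V, ∃ G', T'.card + W'.card < T.card + W.card ∧ Hyp μ T' W' t a G' := by
  set R := res G (((T ∪ W : Finset V) : Set V) \ {t, a, k}) with hR
  have hmem : ∀ z ∈ W, z ≠ k → z ∈ (((T ∪ W : Finset V) : Set V) \ {t, a, k}) := by
    intro z hz hzk
    refine ⟨by simp [hz], ?_⟩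
    simp only [Set.mem_insert_iff, Set.mem_singleton_iff, not_or]
    exact ⟨fun e => h.disj _ ht (e ▸ hz), fun e => h.disj _ ha (e ▸ hz), hzk⟩
  have hxy : ∀ z ∈ W, z ≠ k → ∀ o ∈ W, o ≠ k → R.Reachable z x → R.Reachable o y → R.Reachable z o := by
    intro z hz hzk o ho hok h1 h2
    have m1 := res_reach_mem h1 (hmem z hz hzk)
    have m2 := res_reach_mem h2 (hmem o ho hok)
    rcases h.xy with rfl | e
    · exact h1.trans h2.symm
    · exact (h1.trans (SimpleGraph.Adj.reachable (G := R) ⟨e, m1, m2⟩)).trans h2.symm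
  by_cases hc : ¬ R.Reachable z x ∧ ¬ R.Reachable z y
  · exact h.cut ht ha hz ho hk hzk hok hta htk hak hzo hc.1 hc.2
  · refine h.cut ht ha ho hz hk hok hzk hta htk hak (fun e => hzo e.symm) ?_ ?_
    · intro e
      apply hc
      refine ⟨fun e' => hzo (e'.trans e.symm), fun e' => hzo (hxy o ho hok z hz hzk e e').symm⟩
    · intro e
      apply hc
      refine ⟨fun e' => hzo (hxy z hz hzk o ho hok e' e), fun e' => hzo (e'.trans e.symm)⟩

open Classical in
theorem Hyp.two {V : Type*} {μ : ℕ} {T W : Finset V} {x y : V} {G : SimpleGraph V}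
    (h : Hyp μ T W x y G)
    (hmin : ∀ (T' W' : Finset V) x' y' G', T'.card + W'.card < T.card + W.card →
      ¬ Hyp μ T' W' x' y' G') {t a : V} (ht : t ∈ T) (ha : a ∈ T) (hta : G.Adj t a) :
    (W.filter (fun w => G.Adj t w ∧ G.Adj a w)).card ≤ 2 := by
  by_contra hcon
  obtain ⟨C, hC, hC3⟩ := Finset.exists_subset_card_eq (show 3 ≤ _ from not_le.1 hcon)
  obtain ⟨w0, w1, w2, h01, h02, h12, rfl⟩ := Finset.card_eq_three.1 hC3
  have m0 := hC (show w0 ∈ _ by simp)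
  have m1 := hC (show w1 ∈ _ by simp)
  have m2 := hC (show w2 ∈ _ by simp)
  rw [Finset.mem_filter] at m0 m1 m2
  have nocut : ∀ {z o k}, z ∈ W → o ∈ W → k ∈ W → z ≠ k → o ≠ k → G.Adj k t → G.Adj k a →
      (res G (((T ∪ W : Finset V) : Set V) \ {t, a, k})).Reachable z o := by
    intro z o k hz ho hk h1 h2 h3 h4
    by_contra hr
    obtain ⟨T', W', G', hlt, hh⟩ := h.cut2 ht ha hz ho hk h1 h2 hta h3 h4 hr
    exact hmin _ _ _ _ _ hlt hh
  have st : ∀ z ∈ W, ∀ o ∈ W, ¬ G.Adj z o := fun z hz o ho hzo => h.disj o (h.sup z hz o hzo) ho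
  refine cut3 h.pl ((T ∪ W : Finset V) : Set V) t a ![w0, w1, w2] ?_ ?_ hta ?_ ?_ ?_ ?_ ?_
  · intro i j hij
    fin_cases i <;> fin_cases j <;> simp at hij ⊢ <;> first | assumption | (apply Ne.symm; assumption)
  · intro i j
    fin_cases i <;> fin_cases j <;> apply st <;> first | exact m0.1 | exact m1.1 | exact m2.1
  · intro i
    fin_cases i
    exacts [m0.2.1, m1.2.1, m2.2.1]
  · intro i
    fin_cases i
    exacts [m0.2.2, m1.2.2, m2.2.2]
  · exact nocut m0.1 m1.1 m2.1 h02 h12 m2.2.1.symm m2.2.2.symm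
  · exact nocut m1.1 m2.1 m0.1 h01.symm h02.symm m0.2.1.symm m0.2.2.symm
  · exact nocut m2.1 m0.1 m1.1 h12.symm h01 m1.2.1.symm m1.2.2.symm

open Classical in
theorem Hyp.com {V : Type*} {μ : ℕ} (hμ : 1 ≤ μ) {T W : Finset V} {x y : V} {G : SimpleGraph V}
    (h : Hyp μ T W x y G)
    (hmin : ∀ (T' W' : Finset V) x' y' G', T'.card + W'.card < T.card + W.card →
      ¬ Hyp μ T' W' x' y' G') {w t : V} (hw : w ∈ W) (hwt : G.Adj w t) :
    ∃ u ∈ T, G.Adj t u ∧ G.Adj w u := by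
  by_contra hcon
  push Not at hcon
  have ht := h.sup w hw t hwt
  have hTw : ∀ u ∈ T, u ≠ w := fun u hu e => h.disj u hu (e ▸ hw)
  refine hmin T (W.erase w) x y (contr G w t) ?_ ?_
  · have := Finset.card_erase_lt_of_mem hw
    omega
  have up : ∀ u v, u ≠ w → v ≠ w → G.Adj u v → (contr G w t).Adj u v :=
    fun u v h1 h2 h3 => ⟨h1, h2, h3.ne, Or.inl h3⟩
  refine ⟨?_, h.pl.contr hwt, ?_, ?_, h.xT, h.yT, ?_, h.ex, ?_⟩
  · intro v hv hv'
    exact h.disj v hv (Finset.mem_of_mem_erase hv')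
  · rintro v hv u ⟨_, _, _, h4⟩
    have hvW := Finset.mem_of_mem_erase hv
    rcases h4 with h4 | ⟨rfl, h4⟩ | ⟨rfl, h4⟩
    · exact h.sup v hvW u h4
    · exact absurd hvW (h.disj _ ht)
    · exact ht
  · intro v hv
    refine (h.degW v (Finset.mem_of_mem_erase hv)).trans (Finset.card_le_card ?_)
    intro u hu
    rw [Finset.mem_filter] at hu ⊢
    exact ⟨hu.1, up _ _ (Finset.ne_of_mem_erase hv) (hTw u hu.1) hu.2⟩
  · rcases h.xy with h1 | h1
    · exact Or.inl h1
    · exact Or.inr (up _ _ (hTw x h.xT) (hTw y h.yT) h1)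
  · intro s hs hsx hsy
    have hb := h.bad s hs hsx hsy
    have hsub : T.filter (G.Adj s) ⊆ T.filter ((contr G w t).Adj s) := by
      intro u hu
      rw [Finset.mem_filter] at hu ⊢
      exact ⟨hu.1, up _ _ (hTw s hs) (hTw u hu.1) hu.2⟩
    have hsubW : (W.filter (G.Adj s)).erase w ⊆ (W.erase w).filter ((contr G w t).Adj s) := by
      intro u hu
      rw [Finset.mem_erase, Finset.mem_filter] at hu
      rw [Finset.mem_filter, Finset.mem_erase]
      exact ⟨⟨hu.1, hu.2.1⟩, up _ _ (hTw s hs) hu.1 hu.2.2⟩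
    have cW := Finset.card_le_card hsubW
    by_cases hsw : G.Adj w s
    · -- strictly more terminal neighbours
      have hnew : ∃ u ∈ T, ¬ G.Adj s u ∧ (contr G w t).Adj s u := by
        by_cases hst : s = t
        · subst hst
          obtain ⟨u, hu, hus, _⟩ := exists_third _ (h.degW w hw) s s
          rw [Finset.mem_filter] at hu
          exact ⟨u, hu.1, fun e => hcon u hu.1 e hu.2,
            ⟨hTw s hs, hTw u hu.1, hus.symm, Or.inr (Or.inl ⟨rfl, hu.2⟩)⟩⟩
        · exact ⟨t, ht, fun e => hcon s hs e.symm hsw,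
            ⟨hTw s hs, hTw t ht, hst, Or.inr (Or.inr ⟨rfl, hsw⟩)⟩⟩
      obtain ⟨u, hu, hu1, hu2⟩ := hnew
      have c1 : (T.filter (G.Adj s)).card < (T.filter ((contr G w t).Adj s)).card := by
        apply Finset.card_lt_card
        exact Finset.ssubset_iff_of_subset hsub |>.2 ⟨u, by simp [hu, hu2], by simp [hu1]⟩
      rw [Finset.card_erase_of_mem (by simp [hw, hsw.symm])] at cW
      have c2 := Nat.mul_le_mul_left μ (Nat.succ_le_of_lt c1)
      rw [Nat.succ_eq_add_one, mul_add] at c2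
      omega
    · rw [Finset.erase_eq_of_notMem (by
        intro e
        exact hsw (Finset.mem_filter.1 e).2.symm)] at cW
      have c2 := Nat.mul_le_mul_left μ (Finset.card_le_card hsub)
      omega

open Classical in
theorem Hyp.tri {V : Type*} {μ : ℕ} {T W : Finset V} {x y : V} {G : SimpleGraph V}
    (h : Hyp μ T W x y G) (hmax : ∀ G', G ≤ G' → Hyp μ T W x y G' → G' ≤ G)
    {w p q r : V} (hw : w ∈ W) (hpq : p ≠ q) (hpr : p ≠ r) (hqr : q ≠ r)
    (hN : T.filter (G.Adj w) = {p, q, r}) : G.Adj p q := by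
  have mem : ∀ u, (u ∈ T ∧ G.Adj w u) ↔ u = p ∨ u = q ∨ u = r := by
    intro u
    have : u ∈ T.filter (G.Adj w) ↔ u ∈ ({p, q, r} : Finset V) := by rw [hN]
    simpa using this
  have hp := (mem p).2 (by simp)
  have hq := (mem q).2 (by simp)
  have hr := (mem r).2 (by simp)
  have hpl := yd hpq hpr hqr hp.2 hq.2 hr.2 (fun u hu => (mem u).1 ⟨h.sup w hw u hu, hu⟩) h.pl
  have hle : G ≤ addE G p q hpq := fun _ _ h => Or.inl h
  refine hmax (addE G p q hpq) hle ?_ (Or.inr (Or.inl ⟨rfl, rfl⟩))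
  have mono : ∀ (A : Finset V) s, (A.filter (G.Adj s)).card ≤ (A.filter ((addE G p q hpq).Adj s)).card := by
    intro A s
    apply Finset.card_le_card
    intro u hu
    rw [Finset.mem_filter] at hu ⊢
    exact ⟨hu.1, hle hu.2⟩
  refine ⟨h.disj, hpl, ?_, fun v hv => (h.degW v hv).trans (mono _ _), h.xT, h.yT,
    h.xy.imp id (fun e => hle e), h.ex, ?_⟩
  · rintro v hv u (h1 | ⟨rfl, rfl⟩ | ⟨rfl, rfl⟩)
    · exact h.sup v hv u h1
    · exact hq.1
    · exact hp.1
  · intro s hs h1 h2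
    have := h.bad s hs h1 h2
    have c1 := Nat.mul_le_mul_left μ (mono T s)
    have c2 := mono W s
    omega

open Classical in
theorem Hyp.charge {V : Type*} {μ : ℕ} (hμ : 1 ≤ μ) {T W : Finset V} {x y : V}
    {G : SimpleGraph V} (h : Hyp μ T W x y G)
    (hmin : ∀ (T' W' : Finset V) x' y' G', T'.card + W'.card < T.card + W.card →
      ¬ Hyp μ T' W' x' y' G')
    (hmax : ∀ G', G ≤ G' → Hyp μ T W x y G' → G' ≤ G) {t : V} (ht : t ∈ T) :
    2 * (W.filter (G.Adj t)).card ≤ 2 * (T.filter (G.Adj t)).card +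
      (W.filter (fun w => G.Adj t w ∧ 4 ≤ (T.filter (G.Adj w)).card)).card := by
  have h1 : ∀ w ∈ W.filter (G.Adj t), 2 ≤ ((T.filter (G.Adj t)).filter (fun u => G.Adj w u)).card +
      (if 4 ≤ (T.filter (G.Adj w)).card then 1 else 0) := by
    intro w hw
    obtain ⟨hw, htw⟩ := Finset.mem_filter.1 hw
    by_cases h4 : 4 ≤ (T.filter (G.Adj w)).card
    · rw [if_pos h4]
      obtain ⟨u, hu, htu, hwu⟩ := h.com hμ hmin hw htw.symm
      have : 0 < ((T.filter (G.Adj t)).filter (fun u => G.Adj w u)).card :=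
        Finset.card_pos.2 ⟨u, by simp [hu, htu, hwu]⟩
      omega
    · rw [if_neg h4]
      have h3 : (T.filter (G.Adj w)).card = 3 := by
        have := h.degW w hw
        omega
      obtain ⟨p, q, r, hpq, hpr, hqr, hN⟩ := Finset.card_eq_three.1 h3
      have e1 : ({p, q, r} : Finset V) = {q, p, r} := by ext; simp; tauto
      have e2 : ({p, q, r} : Finset V) = {p, r, q} := by ext; simp; tauto
      have e3 : ({p, q, r} : Finset V) = {q, r, p} := by ext; simp; tauto
      have a1 := h.tri hmax hw hpq hpr hqr hN
      have a2 := h.tri hmax hw hpr hpq hqr.symm (hN.trans e2)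
      have a3 := h.tri hmax hw hqr hpq.symm hpr.symm (hN.trans e3)
      have hsub : (T.filter (G.Adj w)).erase t ⊆
          (T.filter (G.Adj t)).filter (fun u => G.Adj w u) := by
        intro u hu
        have htm : t ∈ T.filter (G.Adj w) := by simp [ht, htw.symm]
        obtain ⟨hut, hu⟩ := Finset.mem_erase.1 hu
        have hu' := Finset.mem_filter.1 hu
        rw [hN] at hu htm
        simp only [Finset.mem_insert, Finset.mem_singleton] at hu htm
        rw [Finset.mem_filter, Finset.mem_filter]
        refine ⟨⟨hu'.1, ?_⟩, hu'.2⟩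
        rcases hu with rfl | rfl | rfl <;> rcases htm with rfl | rfl | rfl <;>
          first | exact absurd rfl hut | assumption | (apply SimpleGraph.Adj.symm; assumption)
      have := Finset.card_le_card hsub
      rw [Finset.card_erase_of_mem (by simp [ht, htw.symm]), h3] at this
      omega
  have h2 := Finset.sum_le_sum h1
  rw [Finset.sum_add_distrib, Finset.sum_const, smul_eq_mul, ← Finset.card_filter,
    Finset.filter_filter] at h2
  have h3 : ∑ w ∈ W.filter (G.Adj t), ((T.filter (G.Adj t)).filter (fun u => G.Adj w u)).card ≤
      (T.filter (G.Adj t)).card * 2 := by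
    have e := Finset.sum_card_bipartiteAbove_eq_sum_card_bipartiteBelow
      (s := W.filter (G.Adj t)) (t := T.filter (G.Adj t)) (fun w u => G.Adj w u)
    unfold Finset.bipartiteAbove Finset.bipartiteBelow at e
    rw [e, ← smul_eq_mul, ← Finset.sum_const]
    refine Finset.sum_le_sum fun u hu => ?_
    obtain ⟨hu, htu⟩ := Finset.mem_filter.1 hu
    refine le_trans (Finset.card_le_card ?_) (h.two hmin ht hu htu)
    intro w hw
    simp only [Finset.mem_filter] at hw ⊢
    exact ⟨hw.1.1, hw.1.2, hw.2.symm⟩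
  omega

open Classical in
theorem Hyp.euler {V : Type*} [Fintype V] {μ : ℕ} {T W : Finset V} {x y : V}
    {G : SimpleGraph V} (h : Hyp μ T W x y G) (hN : 3 ≤ T.card + W.card) :
    ∑ t ∈ T, (T.filter (G.Adj t)).card + 2 * ∑ w ∈ W, (T.filter (G.Adj w)).card + 12 ≤
      6 * (T.card + W.card) := by
  have hd : Disjoint T W := Finset.disjoint_left.2 h.disj
  have hc : (T ∪ W).card = T.card + W.card := Finset.card_union_of_disjoint hd
  have hm := mader _ (res G ((T ∪ W : Finset V) : Set V)) (T ∪ W) hc hN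
    (fun a b hab => by simpa using hab.2.1) (Pl.mono (res_le _ _) h.pl).1
  have hs := (res G ((T ∪ W : Finset V) : Set V)).sum_degrees_eq_twice_card_edges
  have h0 : ∑ v ∈ T ∪ W, (res G ((T ∪ W : Finset V) : Set V)).degree v ≤
      ∑ v, (res G ((T ∪ W : Finset V) : Set V)).degree v :=
    Finset.sum_le_univ_sum_of_nonneg (fun _ => Nat.zero_le _)
  rw [Finset.sum_union hd] at h0
  have hT : ∀ t ∈ T, (T.filter (G.Adj t)).card + (W.filter (G.Adj t)).card ≤
      (res G ((T ∪ W : Finset V) : Set V)).degree t := by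
    intro t ht
    rw [← Finset.card_union_of_disjoint (Finset.disjoint_filter_filter hd),
      ← SimpleGraph.card_neighborFinset_eq_degree]
    refine Finset.card_le_card fun u hu => ?_
    rw [SimpleGraph.mem_neighborFinset]
    simp only [Finset.mem_union, Finset.mem_filter] at hu
    refine ⟨by tauto, by simp [ht], ?_⟩
    simp only [Finset.coe_union, Set.mem_union, Finset.mem_coe]
    tauto
  have hW : ∀ w ∈ W, (T.filter (G.Adj w)).card ≤
      (res G ((T ∪ W : Finset V) : Set V)).degree w := by
    intro w hw
    rw [← SimpleGraph.card_neighborFinset_eq_degree]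
    refine Finset.card_le_card fun u hu => ?_
    rw [SimpleGraph.mem_neighborFinset]
    simp only [Finset.mem_filter] at hu
    exact ⟨hu.2, by simp [hw], by simp [hu.1]⟩
  have h1 := Finset.sum_le_sum hT
  have h2 := Finset.sum_le_sum hW
  rw [Finset.sum_add_distrib] at h1
  have e := Finset.sum_card_bipartiteAbove_eq_sum_card_bipartiteBelow
      (s := T) (t := W) (fun t w => G.Adj t w)
  unfold Finset.bipartiteAbove Finset.bipartiteBelow at e
  beta_reduce at e
  have e' : ∑ w ∈ W, (T.filter (G.Adj w)).card = ∑ w ∈ W, (T.filter (fun a => G.Adj a w)).card := by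
    refine Finset.sum_congr rfl fun w _ => ?_
    congr 1
    ext u
    simp [G.adj_comm]
  have e'' : ∑ t ∈ T, (W.filter (G.Adj t)).card = ∑ t ∈ T, (W.filter (fun w => G.Adj t w)).card := rfl
  omega

open Classical in
theorem Hyp.contra {V : Type*} [Fintype V] {μ : ℕ} (hμ : 1 ≤ μ) {T W : Finset V} {x y : V}
    {G : SimpleGraph V} (h : Hyp μ T W x y G)
    (hmin : ∀ (T' W' : Finset V) x' y' G', T'.card + W'.card < T.card + W.card →
      ¬ Hyp μ T' W' x' y' G')
    (hmax : ∀ G', G ≤ G' → Hyp μ T W x y G' → G' ≤ G) : False := by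
  have hN : 3 ≤ T.card + W.card := by
    obtain ⟨t, ht, htx, hty⟩ := h.ex
    have hb := h.bad t ht htx hty
    have h1 := Finset.card_filter_le T (G.Adj t)
    have h2 := Finset.card_filter_le W (G.Adj t)
    by_contra hcon
    have : (T.filter (G.Adj t)).card ≤ 2 := by omega
    have := Nat.mul_le_mul_left μ this
    omega
  have he := h.euler hN
  have hlow : ∀ t ∈ T, 12 ≤ (2 * (T.filter (G.Adj t)).card +
      (W.filter (fun w => G.Adj t w ∧ 4 ≤ (T.filter (G.Adj w)).card)).card) +
      ((if t = x then 10 else 0) + (if t = y then 10 else 0)) := by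
    intro t ht
    have pos : ∀ {s u : V}, u ∈ T → G.Adj s u → 1 ≤ (T.filter (G.Adj s)).card :=
      fun {s u} hu hsu => Finset.card_pos.2 ⟨u, by simp [hu, hsu]⟩
    by_cases htx : t = x
    · by_cases hty : t = y
      · rw [if_pos htx, if_pos hty]; omega
      · rw [if_pos htx, if_neg hty]
        have hxy := h.xy
        rw [← htx] at hxy
        have := pos h.yT (hxy.resolve_left hty)
        omega
    · by_cases hty : t = y
      · rw [if_neg htx, if_pos hty]
        have hxy := h.xy
        rw [← hty] at hxy
        have := pos h.xT (hxy.resolve_left (Ne.symm htx)).symm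
        omega
      · rw [if_neg htx, if_neg hty]
        have hb := h.bad t ht htx hty
        have hch := h.charge hμ hmin hmax ht
        by_contra hcon
        have h5 : (T.filter (G.Adj t)).card ≤ 5 := by omega
        have := Nat.mul_le_mul_left μ h5
        omega
  have hs := Finset.sum_le_sum hlow
  rw [Finset.sum_add_distrib, Finset.sum_add_distrib, Finset.sum_add_distrib, Finset.sum_const,
    smul_eq_mul, ← Finset.mul_sum, Finset.sum_ite_eq', Finset.sum_ite_eq', if_pos h.xT,
    if_pos h.yT] at hs
  have e := Finset.sum_card_bipartiteAbove_eq_sum_card_bipartiteBelow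
      (s := T) (t := W) (fun t w => G.Adj t w ∧ 4 ≤ (T.filter (G.Adj w)).card)
  unfold Finset.bipartiteAbove Finset.bipartiteBelow at e
  beta_reduce at e
  rw [e] at hs
  have hw : ∀ w ∈ W, (T.filter (fun t => G.Adj t w ∧ 4 ≤ (T.filter (G.Adj w)).card)).card + 12 ≤
      4 * (T.filter (G.Adj w)).card := by
    intro w hw
    have h3 := h.degW w hw
    by_cases h4 : 4 ≤ (T.filter (G.Adj w)).card
    · have : (T.filter (fun t => G.Adj t w ∧ 4 ≤ (T.filter (G.Adj w)).card)).card ≤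
          (T.filter (G.Adj w)).card := by
        refine Finset.card_le_card fun u hu => ?_
        simp only [Finset.mem_filter] at hu ⊢
        exact ⟨hu.1, hu.2.1.symm⟩
      omega
    · have : (T.filter (fun t => G.Adj t w ∧ 4 ≤ (T.filter (G.Adj w)).card)).card = 0 := by
        rw [Finset.card_eq_zero, Finset.filter_eq_empty_iff]
        intro u _ hu
        exact h4 hu.2
      omega
  have hws := Finset.sum_le_sum hw
  rw [Finset.sum_add_distrib, Finset.sum_const, smul_eq_mul, ← Finset.mul_sum] at hws
  omega

theorem core {V : Type*} [Fintype V] {μ : ℕ} (hμ : 1 ≤ μ) : ∀ (n : ℕ) (T W : Finset V) (x y : V)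
    (G : SimpleGraph V), T.card + W.card = n → ¬ Hyp μ T W x y G := by
  intro n
  induction n using Nat.strong_induction_on with
  | _ n ih =>
    intro T W x y G hn h
    have hfin : {G' : SimpleGraph V | Hyp μ T W x y G'}.Finite := Set.toFinite _
    obtain ⟨G', _, hG'⟩ := hfin.exists_le_maximal (a := G) h
    refine Hyp.contra hμ hG'.prop (fun T' W' x' y' G' hlt => ih _ (hn ▸ hlt) T' W' x' y' G' rfl) ?_
    intro G2 hle h2
    exact hG'.le_of_ge h2 hle

end PPE

theorem planar_parallel_edges {V : Type*} [Fintype V] [DecidableEq V]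
    (T : Set V) (m : V → V → ℕ)
    (hsymm : ∀ a b, m a b = m b a) (hloop : ∀ a, m a a = 0)
    (G : SimpleGraph V) (hG : ∀ a b, G.Adj a b ↔ a ≠ b ∧ 0 < m a b)
    (hplanar : IsPlanar G)
    (hstable : ∀ a b, a ∉ T → b ∉ T → ¬ G.Adj a b)
    (hdeg : ∀ w, w ∉ T → 3 ≤ ∑ v, m w v)
    (hpar : ∀ a b, 2 ≤ m a b → a ∈ T ∧ b ∈ T)
    (k : ℕ) (hk : 10 < k) (hT : T.Nontrivial)
    (hconn : ∀ u ∈ T, ∀ v ∈ T, u ≠ v → MultiElemConn G m T u v k) :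
    ∃ t₁ ∈ T, ∃ t₂ ∈ T, t₁ ≠ t₂ ∧ (k + 4) / 5 - 1 ≤ m t₁ t₂ := by
  classical
  by_contra hcon
  push Not at hcon
  obtain ⟨μ, hμ⟩ : ∃ μ, μ = (k + 4) / 5 - 2 := ⟨_, rfl⟩
  have hμ1 : 1 ≤ μ := by omega
  have hμk : 5 * μ + 6 ≤ k := by omega
  have hm : ∀ a ∈ T, ∀ b ∈ T, m a b ≤ μ := by
    intro a ha b hb
    by_cases hab : a = b
    · rw [hab, hloop]; omega
    · have := hcon a ha b hb hab
      omega
  have hm0 : ∀ a b, ¬ G.Adj a b → m a b = 0 := by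
    intro a b hab
    by_cases h : a = b
    · rw [h, hloop]
    · by_contra h0
      exact hab ((hG a b).2 ⟨h, by omega⟩)
  have hm1 : ∀ a b, a ∉ T → m a b ≤ 1 := by
    intro a b ha
    by_contra h
    exact ha (hpar a b (by omega)).1
  have hkdeg : ∀ t ∈ T, k ≤ ∑ v, m t v := by
    intro t ht
    obtain ⟨u, hu, hut⟩ := hT.exists_ne t
    obtain ⟨P, -, -, hP⟩ := hconn t ht u hu hut.symm
    have hfirst : ∀ i, ∃ v, s(t, v) ∈ (P i).edges := by
      intro i
      cases hp : P i with
      | nil => exact absurd rfl hut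
      | cons hadj q => exact ⟨_, by rw [SimpleGraph.Walk.edges_cons]; exact List.mem_cons_self⟩
    choose f hf using hfirst
    have h1 := Finset.card_eq_sum_card_fiberwise (s := (Finset.univ : Finset (Fin k)))
      (t := (Finset.univ : Finset V)) (f := f) (fun _ _ => by simp)
    rw [Finset.card_univ, Fintype.card_fin] at h1
    rw [h1]
    refine Finset.sum_le_sum fun v _ => le_trans ?_ (hP t v)
    rw [← Set.ncard_coe_finset]
    refine Set.ncard_le_ncard ?_ (Set.toFinite _)
    intro i hi
    simp only [Finset.coe_filter, Finset.mem_univ, true_and, Set.mem_ofPred_eq] at hi ⊢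
    rw [← hi]
    exact hf i
  obtain ⟨TF, hTF⟩ : ∃ TF : Finset V, ∀ v, v ∈ TF ↔ v ∈ T := ⟨T.toFinset, by simp⟩
  obtain ⟨x, hx⟩ := hT.nonempty
  refine PPE.core (μ := μ) hμ1 _ TF TFᶜ x x G rfl ?_
  have bound : ∀ t c, (∀ b ∈ T, m t b ≤ c) → ∑ v ∈ TF, m t v ≤ c * (TF.filter (G.Adj t)).card := by
    intro t c hc
    rw [mul_comm, ← smul_eq_mul, ← Finset.sum_const, Finset.sum_filter]
    refine Finset.sum_le_sum fun v hv => ?_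
    split_ifs with h
    · exact hc v ((hTF v).1 hv)
    · rw [hm0 _ _ h]
  have bound2 : ∀ t, ∑ v ∈ TFᶜ, m t v ≤ (TFᶜ.filter (G.Adj t)).card := by
    intro t
    rw [Finset.card_filter]
    refine Finset.sum_le_sum fun v hv => ?_
    rw [Finset.mem_compl, hTF] at hv
    split_ifs with h
    · rw [hsymm]; exact hm1 v t hv
    · rw [hm0 _ _ h]
  refine ⟨?_, (PPE.pl_iff G).1 hplanar, ?_, ?_, (hTF x).2 hx, (hTF x).2 hx, Or.inl rfl, ?_, ?_⟩
  · intro v hv; simp [hv]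
  · intro w hw u hwu
    rw [Finset.mem_compl, hTF] at hw
    rw [hTF]
    by_contra hu
    exact hstable w u hw hu hwu
  · intro w hw
    rw [Finset.mem_compl, hTF] at hw
    have h1 := hdeg w hw
    rw [← Finset.sum_add_sum_compl TF] at h1
    have h2 := bound w 1 (fun b _ => hm1 w b hw)
    have h3 : ∑ v ∈ TFᶜ, m w v = 0 := by
      refine Finset.sum_eq_zero fun v hv => hm0 _ _ ?_
      rw [Finset.mem_compl, hTF] at hv
      exact hstable w v hw hv
    have h4 : 3 ≤ (TF.filter (G.Adj w)).card := by omega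
    convert h4
  · obtain ⟨u, hu, hux⟩ := hT.exists_ne x
    exact ⟨u, (hTF u).2 hu, hux, hux⟩
  · intro t ht _ _
    rw [hTF] at ht
    have h1 := hkdeg t ht
    rw [← Finset.sum_add_sum_compl TF] at h1
    have h2 := bound t μ (hm t ht)
    have h3 := bound2 t
    have h4 : 5 * μ + 6 ≤ μ * (TF.filter (G.Adj t)).card + (TFᶜ.filter (G.Adj t)).card := by omega
    convert h4
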